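/- arXiv:1210.4328 — 5 statements merged into one kernel-verified Lean document; each statement's English description precedes it below -/
import Mathlib

section
/- Let W be a group acting on a tree T such that all vertex stabilizers are finite, and let s₁, s₂, s₀ be elements of order 2 in W. Suppose ⟨s₁, s₂⟩ is infinite, the fixed-point sets Fix(s₁) and Fix(s₂) in T are nonempty and disjoint, and the pointwise stabilizer of the unique edge e joining Fix(s₁) to Fix(s₂) is ⟨s₀⟩ of order 2. Then s₀ is the unique nontrivial element x ∈ W such that both ⟨x, s₁⟩ and ⟨x, s₂⟩ are finite. -/
/-!
A nonempty bounded set of vertices of a tree has a centre, which is a vertex or an edge, so a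
finite group leaves such a clique invariant. If `⟨x, sᵢ⟩` is finite, then `sᵢ`, which fixes a
vertex, cannot invert an edge and hence fixes its clique pointwise; so there are `a ∈ Fix(s₁)` and
`b ∈ Fix(s₂)` whose translates `x • a` and `x • b` are still in `Fix(s₁)` and `Fix(s₂)`, with
`x • x • a = a`. The four geodesics from `{a, x • a}` to `{b, x • b}` all pass through `e`, and
comparing their lengths shows that `a` and `x • a` are equally far from `e`. Hence `x` carries the
copy of `e` on `[a, b]` to the copy of `e` on `[x • a, x • b]`, that is, `x` fixes `e`.
-/

open SimpleGraph

section Distance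

variable {V : Type*} {G T : SimpleGraph V}

theorem edist_map_le {V' : Type*} {G' : SimpleGraph V'} (f : G →g G') (u v : V) :
    G'.edist (f u) (f v) ≤ G.edist u v :=
  le_iInf fun p ↦ (edist_le (p.map f)).trans_eq (by rw [Walk.length_map])

theorem exists_adj_dist_eq_dist_add_one (hG : G.Connected) {u v : V} (huv : u ≠ v) :
    ∃ m, G.Adj u m ∧ G.dist v u = G.dist v m + 1 := by
  obtain ⟨p, hp⟩ := hG.exists_walk_length_eq_dist u v
  cases p with
  | nil => exact absurd rfl huv
  | @cons _ m _ hum q =>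
    refine ⟨m, hum, le_antisymm ?_ ?_⟩
    · exact hG.dist_triangle.trans_eq (by rw [dist_eq_one_iff_adj.mpr hum.symm])
    · rw [dist_comm (u := v) (v := u), ← hp, Walk.length_cons, dist_comm]
      gcongr
      exact dist_le q

theorem eq_of_isPath (hG : G.IsAcyclic) {u v : V} {p q : G.Walk u v} (hp : p.IsPath)
    (hq : q.IsPath) : p = q :=
  congrArg Subtype.val ((hG.subsingleton_path u v).elim ⟨p, hp⟩ ⟨q, hq⟩)

theorem length_eq_dist_of_isPath (hG : G.IsAcyclic) {u v : V} {p : G.Walk u v} (hp : p.IsPath) :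
    p.length = G.dist u v := by
  obtain ⟨q, hq, hlen⟩ := p.reachable.exists_path_of_dist
  rw [← hlen, eq_of_isPath hG hp hq]

theorem getVert_dist_of_dist_add_dist_eq (hT : T.IsTree) {u v w : V} {p : T.Walk u v}
    (hp : p.IsPath) (hw : T.dist u w + T.dist w v = T.dist u v) :
    p.getVert (T.dist u w) = w := by
  obtain ⟨q, hq⟩ := hT.connected.exists_walk_length_eq_dist u w
  obtain ⟨r, hr⟩ := hT.connected.exists_walk_length_eq_dist w v
  have hqr : (q.append r).IsPath :=
    Walk.isPath_of_length_eq_dist _ (by rw [Walk.length_append, hq, hr, hw])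
  rw [eq_of_isPath hT.isAcyclic hp hqr, Walk.getVert_append, ← hq]
  simp

theorem eq_of_dist_add_dist_eq (hT : T.IsTree) {u v w w' : V}
    (hw : T.dist u w + T.dist w v = T.dist u v) (hw' : T.dist u w' + T.dist w' v = T.dist u v)
    (h : T.dist u w = T.dist u w') : w = w' := by
  obtain ⟨p, hp, -⟩ := hT.connected.exists_path_of_dist u v
  rw [← getVert_dist_of_dist_add_dist_eq hT hp hw, h, getVert_dist_of_dist_add_dist_eq hT hp hw']

theorem dist_eq_dist_add_one_add_dist (hT : T.IsTree) {u v e f : V} (hef : T.Adj e f)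
    (hu : T.dist u f = T.dist u e + 1) (hv : T.dist v e = T.dist v f + 1) :
    T.dist u v = T.dist u e + 1 + T.dist f v := by
  obtain ⟨p, hp⟩ := hT.connected.exists_walk_length_eq_dist u e
  obtain ⟨q, hq⟩ := hT.connected.exists_walk_length_eq_dist f v
  have hleft : (p.concat hef).IsPath :=
    Walk.isPath_of_length_eq_dist _ (by rw [Walk.length_concat, hp, hu])
  have hright : (Walk.cons hef q).IsPath :=
    Walk.isPath_of_length_eq_dist _ <| by
      rw [Walk.length_cons, hq, dist_comm, dist_comm (u := e), hv]
  -- Both halves contain the edge `ef`, so gluing them there creates no backtracking.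
  have hpath : (p.append (Walk.cons hef q)).IsPath := by
    rw [hT.isAcyclic.isPath_iff_isChain] at hleft hright ⊢
    rw [Walk.edges_concat, List.concat_eq_append] at hleft
    rw [Walk.edges_cons, ← List.singleton_append] at hright
    rw [Walk.edges_append, Walk.edges_cons, ← List.singleton_append, ← List.append_assoc]
    exact hleft.append_overlap hright (List.cons_ne_nil _ _)
  rw [← length_eq_dist_of_isPath hT.isAcyclic hpath, Walk.length_append, Walk.length_cons]
  omega

end Distance

section Center

variable {V : Type*} {T : SimpleGraph V}

/-- The centres of the balls of radius `r` in `G` that contain `S`. For the least `r` for which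
there are any, these are the centres of `S` in the sense of Jordan. -/
def ballCenters (G : SimpleGraph V) (S : Set V) (r : ℕ) : Set V :=
  {a | ∀ z ∈ S, G.dist z a ≤ r}

theorem exists_forall_dist_lt_max (hT : T.IsTree) {a b : V} (hne : a ≠ b) (hab : ¬T.Adj a b) :
    ∃ m, ∀ z, T.dist z m < max (T.dist z a) (T.dist z b) := by
  obtain ⟨m, ham, hbm⟩ := exists_adj_dist_eq_dist_add_one hT.connected hne
  have hmb : 0 < T.dist m b := hT.connected.pos_dist_of_ne (by rintro rfl; exact hab ham)
  refine ⟨m, fun z ↦ lt_max_iff.mpr ?_⟩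
  rcases hT.dist_eq_dist_add_one_of_adj z ham with hza | hzm
  · exact .inl (by omega)
  · have := dist_eq_dist_add_one_add_dist hT ham hzm hbm
    exact .inr (by omega)

theorem exists_isClique_ballCenters (hT : T.IsTree) {S : Set V} (hS : S.Nonempty)
    (hbdd : ∃ r, (ballCenters T S r).Nonempty) :
    ∃ r, (ballCenters T S r).Nonempty ∧ T.IsClique (ballCenters T S r) := by
  classical
  refine ⟨Nat.find hbdd, Nat.find_spec hbdd, fun a ha b hb hne ↦ ?_⟩
  by_contra hab
  obtain ⟨m, hm⟩ := exists_forall_dist_lt_max hT hne hab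
  have hlt : ∀ z ∈ S, T.dist z m < Nat.find hbdd := fun z hz ↦
    (hm z).trans_le (max_le (ha z hz) (hb z hz))
  obtain ⟨z₀, hz₀⟩ := hS
  exact Nat.find_min hbdd (Nat.sub_one_lt_of_lt (hlt z₀ hz₀))
    ⟨m, fun z hz ↦ Nat.le_sub_one_of_lt (hlt z hz)⟩

end Center

section Action

variable {V W : Type*} {G T : SimpleGraph V} [Group W] [MulAction W V]

theorem dist_smul_smul (hact : ∀ (w : W) (u v : V), G.Adj u v → G.Adj (w • u) (w • v))
    (w : W) (u v : V) : G.dist (w • u) (w • v) = G.dist u v := by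
  have hle (w : W) (u v : V) : G.edist (w • u) (w • v) ≤ G.edist u v :=
    edist_map_le ⟨(w • ·), hact w _ _⟩ u v
  have hge : G.edist u v ≤ G.edist (w • u) (w • v) := by
    simpa only [inv_smul_smul] using hle w⁻¹ (w • u) (w • v)
  exact congrArg ENat.toNat (le_antisymm (hle w u v) hge)

theorem exists_isClique_forall_smul_mem (hT : T.IsTree)
    (hact : ∀ (w : W) (u v : V), T.Adj u v → T.Adj (w • u) (w • v))
    {v : V} {r : ℕ} (hbdd : ∀ w : W, T.dist (w • v) v ≤ r) :
    ∃ C : Set V, C.Nonempty ∧ T.IsClique C ∧ ∀ w : W, ∀ a ∈ C, w • a ∈ C := by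
  obtain ⟨ρ, hne, hclique⟩ := exists_isClique_ballCenters hT (S := MulAction.orbit W v)
    (MulAction.nonempty_orbit v) ⟨r, v, Set.forall_mem_range.mpr hbdd⟩
  refine ⟨_, hne, hclique, fun w a ha z hz ↦ ?_⟩
  rw [← dist_smul_smul hact w⁻¹, inv_smul_smul]
  exact ha _ (MulAction.mem_orbit_of_mem_orbit _ hz)

theorem smul_eq_of_dist_add_dist_eq (hT : T.IsTree)
    (hact : ∀ (w : W) (u v : V), T.Adj u v → T.Adj (w • u) (w • v))
    {s : W} {u v m : V} (hu : s • u = u) (hv : s • v = v)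
    (hm : T.dist u m + T.dist m v = T.dist u v) : s • m = m := by
  have hum : T.dist u (s • m) = T.dist u m := by rw [← dist_smul_smul hact s u m, hu]
  have hmv : T.dist (s • m) v = T.dist m v := by rw [← dist_smul_smul hact s m v, hv]
  exact eq_of_dist_add_dist_eq hT (by rw [hum, hmv, hm]) hm hum

theorem dist_eq_dist_add_one_of_smul_ne (hT : T.IsTree)
    (hact : ∀ (w : W) (u v : V), T.Adj u v → T.Adj (w • u) (w • v))
    {s : W} {a e f : V} (ha : s • a = a) (he : s • e = e) (hf : s • f ≠ f) (hef : T.Adj e f) :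
    T.dist a f = T.dist a e + 1 := by
  refine (hT.dist_eq_dist_add_one_of_adj a hef).resolve_left fun h ↦ hf ?_
  refine smul_eq_of_dist_add_dist_eq hT hact ha he ?_
  rw [h, dist_eq_one_iff_adj.mpr hef.symm]

theorem not_adj_smul_of_smul_eq (hT : T.IsTree)
    (hact : ∀ (w : W) (u v : V), T.Adj u v → T.Adj (w • u) (w • v))
    {s : W} {c : V} (hc : s • c = c) (a : V) : ¬T.Adj a (s • a) := fun h ↦
  hT.dist_ne_of_adj c h <| by rw [← dist_smul_smul hact s c a, hc]

theorem smul_smul_eq_of_isClique (hT : T.IsTree)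
    (hact : ∀ (w : W) (u v : V), T.Adj u v → T.Adj (w • u) (w • v))
    {C : Set V} (hC : T.IsClique C) {x : W} (hx : ∀ a ∈ C, x • a ∈ C) {a : V} (ha : a ∈ C) :
    x • x • a = a := by
  by_contra hne
  have hxa : a ≠ x • a := fun h ↦ hne (by rw [← h, ← h])
  have h₁ : T.Adj a (x • a) := hC ha (hx a ha) hxa
  have h₂ : T.Adj a (x • x • a) := hC ha (hx _ (hx a ha)) (Ne.symm hne)
  exact hT.dist_ne_of_adj a (hact x _ _ h₁)
    ((dist_eq_one_iff_adj.mpr h₁).trans (dist_eq_one_iff_adj.mpr h₂).symm)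

theorem exists_smul_eq_of_finite_closure_pair (hT : T.IsTree)
    (hact : ∀ (w : W) (u v : V), T.Adj u v → T.Adj (w • u) (w • v))
    {s x : W} {c : V} (hc : s • c = c) (hfin : Finite (Subgroup.closure {x, s})) :
    ∃ a : V, s • a = a ∧ s • x • a = x • a ∧ x • x • a = a := by
  obtain ⟨r, hr⟩ := (Set.finite_range
    fun h : Subgroup.closure {x, s} ↦ T.dist (h • c) c).bddAbove
  obtain ⟨C, ⟨a, ha⟩, hclique, hinv⟩ := exists_isClique_forall_smul_mem hT
    (fun h : Subgroup.closure {x, s} ↦ hact h) (Set.forall_mem_range.mp hr)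
  have hx : ∀ b ∈ C, x • b ∈ C := hinv ⟨x, Subgroup.subset_closure (by simp)⟩
  have hs : ∀ b ∈ C, s • b ∈ C := hinv ⟨s, Subgroup.subset_closure (by simp)⟩
  have hfix : ∀ b ∈ C, s • b = b := fun b hb ↦ by
    by_contra hne
    exact not_adj_smul_of_smul_eq hT hact hc b (hclique hb (hs b hb) (Ne.symm hne))
  exact ⟨a, hfix a ha, hfix _ (hx a ha), smul_smul_eq_of_isClique hT hact hclique hx ha⟩

theorem smul_eq_of_edge_separates (hT : T.IsTree)
    (hact : ∀ (w : W) (u v : V), T.Adj u v → T.Adj (w • u) (w • v))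
    {x : W} {a b e f : V} (hef : T.Adj e f) (hxxa : x • x • a = a)
    (ha : ∀ c ∈ ({a, x • a} : Set V), T.dist c f = T.dist c e + 1)
    (hb : ∀ d ∈ ({b, x • b} : Set V), T.dist d e = T.dist d f + 1) :
    x • e = e ∧ x • f = f := by
  simp only [Set.mem_insert_iff, Set.mem_singleton_iff, forall_eq_or_imp, forall_eq] at ha hb
  obtain ⟨ha, hxa⟩ := ha
  obtain ⟨hb, hxb⟩ := hb
  have hab := dist_eq_dist_add_one_add_dist hT hef ha hb
  have haxb := dist_eq_dist_add_one_add_dist hT hef ha hxb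
  have hxab := dist_eq_dist_add_one_add_dist hT hef hxa hb
  have hxaxb := dist_eq_dist_add_one_add_dist hT hef hxa hxb
  have hdiag : T.dist (x • a) (x • b) = T.dist a b := dist_smul_smul hact x a b
  have hcross : T.dist a (x • b) = T.dist (x • a) b := by
    rw [← dist_smul_smul hact x (x • a) b, hxxa]
  have hequi : T.dist (x • a) e = T.dist a e := by omega
  have hae := dist_smul_smul hact x a e
  have haf := dist_smul_smul hact x a f
  have heb := dist_smul_smul hact x e b
  have hfb := dist_smul_smul hact x f b
  rw [dist_comm, dist_comm (v := f)] at hb hxb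
  constructor <;> refine eq_of_dist_add_dist_eq hT (u := x • a) (v := x • b) ?_ ?_ ?_ <;> omega

theorem finite_closure_of_subset_stabilizer {v : V} [Finite (MulAction.stabilizer W v)] {S : Set W}
    (hS : S ⊆ MulAction.stabilizer W v) : Finite (Subgroup.closure S) :=
  Finite.of_injective _ (Subgroup.inclusion_injective ((Subgroup.closure_le _).mpr hS))

theorem finite_closure_pair_iff (hT : T.IsTree)
    (hact : ∀ (w : W) (u v : V), T.Adj u v → T.Adj (w • u) (w • v))
    {s₁ s₂ : W} {e₁ e₂ : V} [Finite (MulAction.stabilizer W e₁)]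
    [Finite (MulAction.stabilizer W e₂)] (hadj : T.Adj e₁ e₂) (he₁ : s₁ • e₁ = e₁)
    (he₂ : s₂ • e₂ = e₂) (hne₁ : s₂ • e₁ ≠ e₁) (hne₂ : s₁ • e₂ ≠ e₂) (x : W) :
    (Finite (Subgroup.closure {x, s₁}) ∧ Finite (Subgroup.closure {x, s₂})) ↔
      x • e₁ = e₁ ∧ x • e₂ = e₂ := by
  constructor
  · rintro ⟨hfin₁, hfin₂⟩
    obtain ⟨a, ha, hxa, hxxa⟩ := exists_smul_eq_of_finite_closure_pair hT hact he₁ hfin₁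
    obtain ⟨b, hb, hxb, -⟩ := exists_smul_eq_of_finite_closure_pair hT hact he₂ hfin₂
    refine smul_eq_of_edge_separates (a := a) (b := b) hT hact hadj hxxa ?_ ?_
    · rintro c (rfl | rfl) <;>
        exact dist_eq_dist_add_one_of_smul_ne hT hact (by assumption) he₁ hne₂ hadj
    · rintro d (rfl | rfl) <;>
        exact dist_eq_dist_add_one_of_smul_ne hT hact (by assumption) he₂ hne₁ hadj.symm
  · rintro ⟨hx₁, hx₂⟩
    exact ⟨finite_closure_of_subset_stabilizer (Set.pair_subset hx₁ he₁),
      finite_closure_of_subset_stabilizer (Set.pair_subset hx₂ he₂)⟩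

end Action

theorem eq_of_mem_of_card_eq_two {W : Type*} [Group W] {H : Subgroup W} (hH : Nat.card H = 2)
    {x y : W} (hx : x ∈ H) (hy : y ∈ H) (hx1 : x ≠ 1) (hy1 : y ≠ 1) : x = y :=
  congrArg Subtype.val <| ((Nat.card_eq_two_iff' (1 : H)).mp hH).unique (y₁ := ⟨x, hx⟩)
    (y₂ := ⟨y, hy⟩) (Subtype.coe_ne_coe.mp hx1) (Subtype.coe_ne_coe.mp hy1)

theorem stmt_9_general {V : Type*} (T : SimpleGraph V) (hT : T.IsTree)
    {W : Type*} [Group W] [MulAction W V]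
    (hact : ∀ (w : W) (u v : V), T.Adj u v → T.Adj (w • u) (w • v))
    (s₁ s₂ s₀ : W) (h0 : orderOf s₀ = 2)
    (hdisj : Disjoint {v : V | s₁ • v = v} {v : V | s₂ • v = v})
    (e₁ e₂ : V) (hstab₁ : Finite (MulAction.stabilizer W e₁))
    (hstab₂ : Finite (MulAction.stabilizer W e₂)) (hadj : T.Adj e₁ e₂)
    (he₁ : s₁ • e₁ = e₁) (he₂ : s₂ • e₂ = e₂)
    (hstab0 : {w : W | w • e₁ = e₁ ∧ w • e₂ = e₂} = (Subgroup.closure {s₀} : Set W)) :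
    s₀ ≠ 1 ∧ Finite (Subgroup.closure {s₀, s₁} : Subgroup W) ∧
      Finite (Subgroup.closure {s₀, s₂} : Subgroup W) ∧
      ∀ x : W, x ≠ 1 → Finite (Subgroup.closure {x, s₁} : Subgroup W) →
        Finite (Subgroup.closure {x, s₂} : Subgroup W) → x = s₀ := by
  have hmem (x : W) : (Finite (Subgroup.closure {x, s₁}) ∧ Finite (Subgroup.closure {x, s₂})) ↔
      x ∈ Subgroup.closure {s₀} := by
    rw [← SetLike.mem_coe, ← hstab0]
    exact finite_closure_pair_iff hT hact hadj he₁ he₂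
      (Set.disjoint_left.mp hdisj he₁) (Set.disjoint_right.mp hdisj he₂) x
  have hs₀ : s₀ ∈ Subgroup.closure {s₀} := Subgroup.mem_closure_singleton_self s₀
  have hs₀1 : s₀ ≠ 1 := by
    rintro rfl
    simp at h0
  have hcard : Nat.card (Subgroup.closure {s₀}) = 2 := by
    rw [← Subgroup.zpowers_eq_closure, Nat.card_zpowers, h0]
  obtain ⟨hfin₁, hfin₂⟩ := (hmem s₀).mpr hs₀
  exact ⟨hs₀1, hfin₁, hfin₂, fun x hx1 hx₁ hx₂ ↦
    eq_of_mem_of_card_eq_two hcard ((hmem x).mp ⟨hx₁, hx₂⟩) hs₀ hx1 hs₀1⟩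

/-- Let `W` act on a tree `T` with finite vertex stabilizers, let `s₁, s₂, s₀` be involutions
with `⟨s₁, s₂⟩` infinite, `Fix(s₁)` and `Fix(s₂)` nonempty and disjoint, and suppose the
pointwise stabilizer of the unique edge `e = (e₁, e₂)` joining `Fix(s₁)` to `Fix(s₂)` is `⟨s₀⟩`
of order 2.  Then `s₀` is the unique nontrivial element `x` of `W` such that both `⟨x, s₁⟩`
and `⟨x, s₂⟩` are finite. -/
theorem stmt_9 {V : Type*} (T : SimpleGraph V) (hT : T.IsTree)
    {W : Type*} [Group W] [MulAction W V]
    (hact : ∀ (w : W) (u v : V), T.Adj u v → T.Adj (w • u) (w • v))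
    (hstab : ∀ v : V, Finite (MulAction.stabilizer W v))
    (s₁ s₂ s₀ : W)
    (h1 : orderOf s₁ = 2) (h2 : orderOf s₂ = 2) (h0 : orderOf s₀ = 2)
    (hinf : Infinite (Subgroup.closure {s₁, s₂} : Subgroup W))
    (hne1 : {v : V | s₁ • v = v}.Nonempty) (hne2 : {v : V | s₂ • v = v}.Nonempty)
    (hdisj : Disjoint {v : V | s₁ • v = v} {v : V | s₂ • v = v})
    (e₁ e₂ : V) (hadj : T.Adj e₁ e₂)
    (he₁ : s₁ • e₁ = e₁) (he₂ : s₂ • e₂ = e₂)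
    (huniq : ∀ u v : V, T.Adj u v → s₁ • u = u → s₂ • v = v → u = e₁ ∧ v = e₂)
    (hstab0 : {w : W | w • e₁ = e₁ ∧ w • e₂ = e₂} = (Subgroup.closure {s₀} : Set W)) :
    s₀ ≠ 1 ∧ Finite (Subgroup.closure {s₀, s₁} : Subgroup W) ∧
      Finite (Subgroup.closure {s₀, s₂} : Subgroup W) ∧
      ∀ x : W, x ≠ 1 → Finite (Subgroup.closure {x, s₁} : Subgroup W) →
        Finite (Subgroup.closure {x, s₂} : Subgroup W) → x = s₀ := by
  exact stmt_9_general T hT hact s₁ s₂ s₀ h0 hdisj e₁ e₂ (hstab e₁) (hstab e₂) hadj he₁ he₂ hstab0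
end

section
/- Let W be a Coxeter group with Coxeter generating set S, let J ⊆ S, and let w be the product of all elements of J in some fixed order (each element occurring exactly once). Then the parabolic closure of w equals W_J; in particular, w is not contained in W_I for any proper subset I ⊊ J, nor in any conjugate of W_I with |I| < |J|. -/
/-- The standard parabolic subgroup of a Coxeter system on the subset `J` of the
index set. -/
def stdParabolic {B W : Type*} [Group W] {M : CoxeterMatrix B}
    (cs : CoxeterSystem M W) (J : Set B) : Subgroup W :=
  Subgroup.closure (cs.simple '' J)

/-- A parabolic subgroup is a conjugate of a standard parabolic subgroup. -/
def IsParabolic {B W : Type*} [Group W] {M : CoxeterMatrix B}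
    (cs : CoxeterSystem M W) (P : Subgroup W) : Prop :=
  ∃ (J : Set B) (w : W), ∀ x : W, x ∈ P ↔ w⁻¹ * x * w ∈ stdParabolic cs J

/-!
Let `v` lie in a parabolic subgroup `P = x⁻¹ W_I x`, with `x` of minimal length in the coset
`W_I x`. No reflection of `W_I` is a left inversion of `x`, so the cocycle counting modulo 2 the
occurrences of a reflection in left inversion sequences matches the inversions of `x v x⁻¹ ∈ W_I`
with inversions of `v` lying in `P`. Hence `v` is a product of left inversions of `v` that lie in
`P`.

Now let `v = s_b u`, where `u` is a product of simple reflections `s_c` with `c ∈ C` and `b ∉ C`.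
Every entry of the left inversion sequence of this word other than `s_b` lies in `s_b W_C s_b`. If
`s_b ∉ P`, then `v ∈ s_b W_C s_b`, so `s_b ∈ W_C`; but `W_C` fixes the `b`-th coordinate in the
geometric representation and `s_b` does not. Hence `s_b ∈ P`, so `u ∈ P`, and one continues with
`u`.
-/

namespace CoxeterParabolic

open CoxeterSystem

variable {B W : Type*} [Group W] {M : CoxeterMatrix B}

section Reflections

open Module Polynomial.Chebyshev Real

variable {V : Type*} [AddCommGroup V] [Module ℝ V] {x y : V} {f g : Dual ℝ V}

lemma eval_S_two_mul_cos {θ : ℝ} (hθ : sin θ ≠ 0) (k : ℤ) :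
    (S ℝ k).eval (2 * cos θ) = sin ((k + 1) * θ) / sin θ :=
  eq_div_of_mul_eq hθ (S_two_mul_real_cos θ k)

lemma sin_two_pi_div_pos {m : ℕ} (hm : 3 ≤ m) : 0 < sin (2 * π / m) := by
  have hm' : (3 : ℝ) ≤ m := by exact_mod_cast hm
  refine sin_pos_of_pos_of_lt_pi (by positivity) ?_
  rw [div_lt_iff₀ (by positivity)]
  nlinarith [pi_pos]

lemma eval_S_sub_one_eq_zero {k : ℕ} (hk : 2 ≤ k) :
    (S ℝ (k - 1)).eval (2 * cos (2 * π / (2 * k : ℕ))) = 0 := by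
  rw [eval_S_two_mul_cos (sin_two_pi_div_pos (by lia)).ne']
  have hangle : (((k : ℤ) - 1 : ℤ) + 1 : ℝ) * (2 * π / (2 * k : ℕ)) = π := by
    push_cast
    field_simp
    ring
  rw [hangle, sin_pi, zero_div]

lemma eval_S_add_eval_S_sub_one_eq_zero {k : ℕ} (hk : 1 ≤ k) :
    (S ℝ k).eval (2 * cos (2 * π / (2 * k + 1 : ℕ))) +
      (S ℝ (k - 1)).eval (2 * cos (2 * π / (2 * k + 1 : ℕ))) = 0 := by
  have hsin := (sin_two_pi_div_pos (m := 2 * k + 1) (by lia)).ne'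
  have hangle : ((k : ℤ) + 1 : ℝ) * (2 * π / (2 * k + 1 : ℕ)) =
      2 * π - (((k : ℤ) - 1 : ℤ) + 1 : ℝ) * (2 * π / (2 * k + 1 : ℕ)) := by
    push_cast
    field_simp
    ring
  rw [eval_S_two_mul_cos hsin, eval_S_two_mul_cos hsin, hangle, sin_two_pi_sub]
  ring

lemma reflection_mul_reflection_pow_eq_one (hf : f x = 2) (hg : g y = 2) {m : ℕ} (hm : 3 ≤ m)
    (hfg : f y * g x = 4 * cos (π / m) ^ 2) : (reflection hf * reflection hg) ^ m = 1 := by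
  have htrace : 2 * cos (2 * π / m) = f y * g x - 2 := by
    rw [hfg, mul_div_assoc, cos_two_mul]
    ring
  ext z
  rw [reflection_mul_reflection_pow_apply hf hg m z _ htrace]
  obtain ⟨k, rfl | rfl⟩ := m.even_or_odd'
  · rw [show (((2 * k : ℕ) : ℤ) - 2) / 2 = k - 1 by lia,
      show (((2 * k : ℕ) : ℤ) - 1) / 2 = k - 1 by lia, eval_S_sub_one_eq_zero (by lia)]
    simp
  · rw [show (((2 * k + 1 : ℕ) : ℤ) - 2) / 2 = k - 1 by lia,
      show (((2 * k + 1 : ℕ) : ℤ) - 1) / 2 = k by lia,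
      show (((2 * k + 1 : ℕ) : ℤ) - 3) / 2 = k - 1 by lia,
      show ((2 * k + 1 : ℕ) : ℤ) / 2 = k by lia,
      eval_S_add_eval_S_sub_one_eq_zero (by lia)]
    simp

lemma reflection_mul_reflection_sq_eq_one {R V : Type*} [CommRing R] [AddCommGroup V] [Module R V]
    {x y : V} {f g : Dual R V} (hf : f x = 2) (hg : g y = 2) (hfy : f y = 0) (hgx : g x = 0) :
    (reflection hf * reflection hg) ^ 2 = 1 := by
  ext z
  simp only [pow_two, LinearEquiv.mul_apply, reflection_apply, map_sub, map_smul, hf, hg, hfy, hgx,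
    LinearEquiv.coe_one, id_eq]
  module

end Reflections

section GeometricRepresentation

open Real

/-- The coroot of the simple reflection `i`, as a functional on the space `B →₀ ℝ` whose basis is
the set of simple roots: it sends the simple root `j` to `-2 cos (π / M i j)`. For an infinite bond
`M i j = 0`, division by zero makes this the customary value `-2`. -/
noncomputable def simpleCoroot (M : CoxeterMatrix B) (i : B) : Module.Dual ℝ (B →₀ ℝ) :=
  Finsupp.linearCombination ℝ fun j ↦ -2 * cos (π / M i j)

lemma simpleCoroot_single (M : CoxeterMatrix B) (i j : B) :
    simpleCoroot M i (Finsupp.single j 1) = -2 * cos (π / M i j) := by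
  simp [simpleCoroot]

lemma simpleCoroot_single_self (M : CoxeterMatrix B) (i : B) :
    simpleCoroot M i (Finsupp.single i 1) = 2 := by
  simp [simpleCoroot_single]

/-- The action of the simple reflection `i` in the geometric representation. -/
noncomputable def geomReflection (M : CoxeterMatrix B) (i : B) : (B →₀ ℝ) ≃ₗ[ℝ] (B →₀ ℝ) :=
  Module.reflection (simpleCoroot_single_self M i)

lemma geomReflection_apply_of_ne (M : CoxeterMatrix B) {i b : B} (hib : i ≠ b) (z : B →₀ ℝ) :
    geomReflection M i z b = z b := by
  simp [geomReflection, Module.reflection_apply, hib]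

lemma isLiftable_geomReflection (M : CoxeterMatrix B) : M.IsLiftable (geomReflection M) := by
  intro i j
  have hsymm : M j i = M i j := M.symmetric j i
  by_cases hij : i = j
  · subst hij
    ext1 z
    simpa using! Module.involutive_reflection (simpleCoroot_single_self M i) z
  have hne_one : M i j ≠ 1 := M.off_diagonal i j hij
  obtain hinf | htwo | hthree : M i j = 0 ∨ M i j = 2 ∨ 3 ≤ M i j := by lia
  · rw [hinf, pow_zero]
  · rw [htwo]
    apply reflection_mul_reflection_sq_eq_one <;> simp [simpleCoroot_single, hsymm, htwo]
  · refine reflection_mul_reflection_pow_eq_one _ _ hthree ?_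
    rw [simpleCoroot_single, simpleCoroot_single, hsymm]
    ring

/-- The geometric representation of a Coxeter group. -/
noncomputable def geomRep (cs : CoxeterSystem M W) : W →* (B →₀ ℝ) ≃ₗ[ℝ] (B →₀ ℝ) :=
  cs.lift ⟨geomReflection M, isLiftable_geomReflection M⟩

lemma geomRep_simple (cs : CoxeterSystem M W) (i : B) :
    geomRep cs (cs.simple i) = geomReflection M i :=
  cs.lift_apply_simple (isLiftable_geomReflection M) i

lemma geomRep_wordProd_apply_of_notMem (cs : CoxeterSystem M W) {b : B} {ω : List B} (hb : b ∉ ω)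
    (z : B →₀ ℝ) : geomRep cs (cs.wordProd ω) z b = z b := by
  induction ω with
  | nil => simp
  | cons i ω ih =>
    rw [List.mem_cons, not_or] at hb
    rw [cs.wordProd_cons, map_mul, LinearEquiv.mul_apply, geomRep_simple,
      geomReflection_apply_of_ne M (Ne.symm hb.1), ih hb.2]

end GeometricRepresentation

section StandardParabolic

variable (cs : CoxeterSystem M W) {J : Set B} {ω : List B}

lemma simple_mem_stdParabolic {b : B} (hb : b ∈ J) : cs.simple b ∈ stdParabolic cs J :=
  Subgroup.subset_closure (Set.mem_image_of_mem cs.simple hb)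

lemma wordProd_mem_stdParabolic (hω : ∀ b ∈ ω, b ∈ J) : cs.wordProd ω ∈ stdParabolic cs J :=
  Subgroup.list_prod_mem _ <| List.forall_mem_map.mpr fun b hb ↦
    simple_mem_stdParabolic cs (hω b hb)

lemma exists_wordProd_eq_of_mem_stdParabolic {w : W} (hw : w ∈ stdParabolic cs J) :
    ∃ ω : List B, (∀ b ∈ ω, b ∈ J) ∧ cs.wordProd ω = w := by
  have hcons (i : B) (hi : i ∈ J) (v : W) :
      (∃ ω : List B, (∀ b ∈ ω, b ∈ J) ∧ cs.wordProd ω = v) →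
        ∃ ω : List B, (∀ b ∈ ω, b ∈ J) ∧ cs.wordProd ω = cs.simple i * v := by
    rintro ⟨ω, hω, rfl⟩
    exact ⟨i :: ω, List.forall_mem_cons.mpr ⟨hi, hω⟩, cs.wordProd_cons i ω⟩
  induction hw using Subgroup.closure_induction_left with
  | one => exact ⟨[], by simp, cs.wordProd_nil⟩
  | mul_left s hs v _ ih =>
    obtain ⟨i, hi, rfl⟩ := hs
    exact hcons i hi v ih
  | inv_mul_cancel s hs v _ ih =>
    obtain ⟨i, hi, rfl⟩ := hs
    rw [cs.inv_simple]
    exact hcons i hi v ih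

lemma simple_mem_stdParabolic_iff {b : B} : cs.simple b ∈ stdParabolic cs J ↔ b ∈ J := by
  refine ⟨fun h ↦ ?_, simple_mem_stdParabolic cs⟩
  by_contra hb
  obtain ⟨ω, hω, hωb⟩ := exists_wordProd_eq_of_mem_stdParabolic cs h
  have hfix := geomRep_wordProd_apply_of_notMem cs (fun h ↦ hb (hω b h)) (Finsupp.single b 1)
  rw [hωb, geomRep_simple, geomReflection, Module.reflection_apply_self] at hfix
  norm_num at hfix

lemma mem_stdParabolic_of_mem_leftInvSeq (hω : ∀ b ∈ ω, b ∈ J) {t : W}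
    (ht : t ∈ cs.leftInvSeq ω) : t ∈ stdParabolic cs J := by
  induction ω generalizing t with
  | nil => simp at ht
  | cons i ω ih =>
    have hi : cs.simple i ∈ stdParabolic cs J := simple_mem_stdParabolic cs (hω i (by simp))
    rw [leftInvSeq, List.mem_cons, List.mem_map] at ht
    obtain rfl | ⟨r, hr, rfl⟩ := ht
    · exact hi
    · exact mul_mem (mul_mem hi (ih (fun b hb ↦ hω b (List.mem_cons_of_mem i hb)) hr)) (inv_mem hi)

lemma exists_forall_length_le_length_mul (J : Set B) (w : W) :
    ∃ y ∈ stdParabolic cs J, ∀ z ∈ stdParabolic cs J,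
      cs.length (y * w) ≤ cs.length (z * (y * w)) := by
  obtain ⟨y, hy, hmin⟩ := exists_minimalFor_of_wellFoundedLT (· ∈ stdParabolic cs J)
    (fun y ↦ cs.length (y * w)) ⟨1, one_mem _⟩
  refine ⟨y, hy, fun z hz ↦ ?_⟩
  rw [← mul_assoc]
  exact (le_total _ _).elim id (hmin (mul_mem hz hy))

end StandardParabolic

section ReflectionCocycle

lemma prod_map_alternatingWord {G : Type*} [Monoid G] (f : B → G) (i j : B) (n : ℕ) :
    ((alternatingWord i j (2 * n)).map f).prod = (f i * f j) ^ n := by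
  induction n with
  | zero => simp [alternatingWord]
  | succ n ih =>
    rw [show 2 * (n + 1) = 2 * n + 1 + 1 by ring, alternatingWord_succ', alternatingWord_succ']
    simp [ih, pow_succ', mul_assoc]

open Classical in
lemma even_count_leftInvSeq_alternatingWord (cs : CoxeterSystem M W) (i j : B) (t : W) :
    Even ((cs.leftInvSeq (alternatingWord i j (2 * M i j))).count t) := by
  have hperiodic (k : ℕ) : cs.wordProd (alternatingWord j i (2 * (M i j + k) + 1)) =
      cs.wordProd (alternatingWord j i (2 * k + 1)) := by
    simp [prod_alternatingWord_eq_mul_pow, pow_add, Nat.mul_add_div]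
  have hlis : cs.leftInvSeq (alternatingWord i j (2 * M i j)) =
      (List.range (2 * M i j)).map fun k ↦ cs.wordProd (alternatingWord j i (2 * k + 1)) :=
    List.ext_getElem (by simp) fun k hk _ ↦ by
      simpa using! cs.getElem_leftInvSeq_alternatingWord i j (M i j) k (by simpa using hk)
  rw [hlis, two_mul, List.range_add, List.map_append, List.map_map, List.count_append]
  simp [Function.comp_def, hperiodic]

/-- The action of a group `G` on functions `G → A` by conjugation of the argument. -/
def conjArrow (G A : Type*) [Group G] [Monoid A] : G →* MulAut (G → A) :=
  (mulAutArrow (G := ConjAct G) (A := G)).comp ConjAct.toConjAct.toMonoidHom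

lemma conjArrow_apply {G A : Type*} [Group G] [Monoid A] (a : G) (F : G → A) (t : G) :
    conjArrow G A a F t = F (a⁻¹ * t * a) := by
  change F ((ConjAct.toConjAct a)⁻¹ • t) = _
  rw [← ConjAct.toConjAct_inv, ConjAct.toConjAct_smul, inv_inv]

open Classical in
/-- The simple reflection `s i` paired with the indicator function of its set `{s i}` of left
inversions, written multiplicatively to live in a semidirect product. That these pairs satisfy the
Coxeter relations makes the parity of inversions depend on the group element only. -/
noncomputable def simpleWithInversions (cs : CoxeterSystem M W) (i : B) :
    (W → Multiplicative (ZMod 2)) ⋊[conjArrow W (Multiplicative (ZMod 2))] W :=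
  ⟨fun t ↦ Multiplicative.ofAdd (if cs.simple i = t then 1 else 0), cs.simple i⟩

open Classical in
lemma prod_map_simpleWithInversions (cs : CoxeterSystem M W) (ω : List B) :
    (ω.map (simpleWithInversions cs)).prod =
      ⟨fun t ↦ Multiplicative.ofAdd ((cs.leftInvSeq ω).count t : ZMod 2), cs.wordProd ω⟩ := by
  induction ω with
  | nil => rfl
  | cons i ω ih =>
    rw [List.map_cons, List.prod_cons, ih, simpleWithInversions, SemidirectProduct.mul_def,
      cs.wordProd_cons, leftInvSeq]
    congr 1
    funext t
    set r := (cs.simple i)⁻¹ * t * cs.simple i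
    have hconj : MulAut.conj (cs.simple i) r = t := by simp [r, mul_assoc]
    have hcount : ((cs.leftInvSeq ω).map (MulAut.conj (cs.simple i))).count t =
        (cs.leftInvSeq ω).count r := by
      rw [← hconj, List.count_map_of_injective _ _ (MulAut.conj (cs.simple i)).injective]
    rw [List.count_cons, hcount, add_comm, Nat.cast_add, ofAdd_add]
    simp only [beq_iff_eq, Nat.cast_ite, Nat.cast_one, Nat.cast_zero]
    rw [Pi.mul_apply, conjArrow_apply]

lemma isLiftable_simpleWithInversions (cs : CoxeterSystem M W) :
    M.IsLiftable (simpleWithInversions cs) := by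
  classical
  intro i j
  rw [← prod_map_alternatingWord, prod_map_simpleWithInversions]
  have hwordProd : cs.wordProd (alternatingWord i j (2 * M i j)) = 1 := by
    rw [wordProd, prod_map_alternatingWord, cs.simple_mul_simple_pow]
  have hcount (t : W) :
      ((cs.leftInvSeq (alternatingWord i j (2 * M i j))).count t : ZMod 2) = 0 :=
    (ZMod.natCast_eq_zero_iff_even).mpr (even_count_leftInvSeq_alternatingWord cs i j t)
  simp only [hwordProd, hcount]
  rfl

/-- The homomorphism sending `w` to the pair consisting of its reflection cocycle and `w`. -/
noncomputable def withInversions (cs : CoxeterSystem M W) :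
    W →* (W → Multiplicative (ZMod 2)) ⋊[conjArrow W (Multiplicative (ZMod 2))] W :=
  cs.lift ⟨simpleWithInversions cs, isLiftable_simpleWithInversions cs⟩

open Classical in
lemma withInversions_wordProd (cs : CoxeterSystem M W) (ω : List B) :
    withInversions cs (cs.wordProd ω) =
      ⟨fun t ↦ Multiplicative.ofAdd ((cs.leftInvSeq ω).count t : ZMod 2), cs.wordProd ω⟩ := by
  rw [← prod_map_simpleWithInversions, wordProd, map_list_prod, List.map_map]
  congr 2
  funext i
  exact cs.lift_apply_simple (isLiftable_simpleWithInversions cs) i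

lemma withInversions_right (cs : CoxeterSystem M W) (w : W) : (withInversions cs w).right = w := by
  obtain ⟨ω, rfl⟩ := cs.wordProd_surjective w
  rw [withInversions_wordProd]

/-- The reflection cocycle: the parity of the number of occurrences of `t` in the left inversion
sequence of any word for `w`. -/
noncomputable def inversionParity (cs : CoxeterSystem M W) (w t : W) : ZMod 2 :=
  ((withInversions cs w).left t).toAdd

variable (cs : CoxeterSystem M W)

open Classical in
lemma inversionParity_wordProd (ω : List B) (t : W) :
    inversionParity cs (cs.wordProd ω) t = (cs.leftInvSeq ω).count t := by
  rw [inversionParity, withInversions_wordProd, toAdd_ofAdd]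

lemma inversionParity_mul (v w t : W) :
    inversionParity cs (v * w) t =
      inversionParity cs v t + inversionParity cs w (v⁻¹ * t * v) := by
  simp only [inversionParity, map_mul, SemidirectProduct.mul_left, withInversions_right,
    Pi.mul_apply, conjArrow_apply, toAdd_mul]

lemma mem_leftInvSeq_of_inversionParity_ne_zero {ω : List B} {t : W}
    (h : inversionParity cs (cs.wordProd ω) t ≠ 0) : t ∈ cs.leftInvSeq ω := by
  classical
  contrapose! h
  rw [inversionParity_wordProd, List.count_eq_zero_of_not_mem h, Nat.cast_zero]

variable {cs} in
lemma inversionParity_ne_zero_of_isReduced {ω : List B} (hω : cs.IsReduced ω) {t : W}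
    (ht : t ∈ cs.leftInvSeq ω) : inversionParity cs (cs.wordProd ω) t ≠ 0 := by
  classical
  rw [inversionParity_wordProd, List.count_eq_one_of_mem hω.nodup_leftInvSeq ht, Nat.cast_one]
  exact one_ne_zero

lemma isLeftInversion_of_inversionParity_ne_zero {w t : W} (h : inversionParity cs w t ≠ 0) :
    cs.IsLeftInversion w t := by
  obtain ⟨ω, hω, rfl⟩ := cs.exists_isReduced w
  exact cs.isLeftInversion_of_mem_leftInvSeq hω (mem_leftInvSeq_of_inversionParity_ne_zero cs h)

end ReflectionCocycle

section ParabolicClosure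

variable (cs : CoxeterSystem M W) {I : Set B} {x : W}

lemma inversionParity_eq_zero_of_forall_length_le
    (hx : ∀ y ∈ stdParabolic cs I, cs.length x ≤ cs.length (y * x)) {t : W}
    (ht : t ∈ stdParabolic cs I) : inversionParity cs x t = 0 := by
  by_contra h
  exact (isLeftInversion_of_inversionParity_ne_zero cs h).2.not_ge (hx t ht)

-- Compare the cocycle on both sides of `(x * v * x⁻¹) * x = x * v`: `x` contributes nothing.
lemma inversionParity_conj_of_forall_length_le
    (hx : ∀ y ∈ stdParabolic cs I, cs.length x ≤ cs.length (y * x)) {v t : W}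
    (hv : x * v * x⁻¹ ∈ stdParabolic cs I) (ht : t ∈ stdParabolic cs I) :
    inversionParity cs (x * v * x⁻¹) t = inversionParity cs v (x⁻¹ * t * x) := by
  set u := x * v * x⁻¹ with hu
  have hut : u⁻¹ * t * u ∈ stdParabolic cs I := mul_mem (mul_mem (inv_mem hv) ht) hv
  calc inversionParity cs u t
      = inversionParity cs u t + inversionParity cs x (u⁻¹ * t * u) := by
        rw [inversionParity_eq_zero_of_forall_length_le cs hx hut, add_zero]
    _ = inversionParity cs (u * x) t := (inversionParity_mul cs u x t).symm
    _ = inversionParity cs (x * v) t := by rw [hu, inv_mul_cancel_right]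
    _ = inversionParity cs x t + inversionParity cs v (x⁻¹ * t * x) :=
        inversionParity_mul cs x v t
    _ = inversionParity cs v (x⁻¹ * t * x) := by
        rw [inversionParity_eq_zero_of_forall_length_le cs hx ht, zero_add]

lemma mem_stdParabolic_of_inversionParity_ne_zero {w t : W} (hw : w ∈ stdParabolic cs I)
    (h : inversionParity cs w t ≠ 0) : t ∈ stdParabolic cs I := by
  obtain ⟨ω, hω, rfl⟩ := exists_wordProd_eq_of_mem_stdParabolic cs hw
  exact mem_stdParabolic_of_mem_leftInvSeq cs hω (mem_leftInvSeq_of_inversionParity_ne_zero cs h)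

lemma mem_closure_inversionParity_ne_zero (w : W) :
    w ∈ Subgroup.closure {t | inversionParity cs w t ≠ 0} := by
  obtain ⟨ω, hω, rfl⟩ := cs.exists_isReduced w
  rw [← inv_mem_iff, ← cs.prod_leftInvSeq ω]
  exact Subgroup.list_prod_mem _ fun t ht ↦
    Subgroup.subset_closure (inversionParity_ne_zero_of_isReduced hω ht)

variable {cs} in
lemma exists_forall_length_le_of_isParabolic {P : Subgroup W} (hP : IsParabolic cs P) :
    ∃ (I : Set B) (x : W), (∀ y ∈ stdParabolic cs I, cs.length x ≤ cs.length (y * x)) ∧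
      ∀ p, p ∈ P ↔ x * p * x⁻¹ ∈ stdParabolic cs I := by
  obtain ⟨I, g, hPg⟩ := hP
  obtain ⟨y, hy, hmin⟩ := exists_forall_length_le_length_mul cs I g⁻¹
  refine ⟨I, y * g⁻¹, hmin, fun p ↦ ?_⟩
  have hconj : y * g⁻¹ * p * (y * g⁻¹)⁻¹ = y * (g⁻¹ * p * g) * y⁻¹ := by group
  rw [hPg, hconj, Subgroup.mul_mem_cancel_right _ (inv_mem hy), Subgroup.mul_mem_cancel_left _ hy]

variable {cs} in
lemma mem_closure_inversions_of_isParabolic {P : Subgroup W} (hP : IsParabolic cs P) {v : W}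
    (hv : v ∈ P) : v ∈ Subgroup.closure {t ∈ P | inversionParity cs v t ≠ 0} := by
  obtain ⟨I, x, hx, hPx⟩ := exists_forall_length_le_of_isParabolic hP
  set T := {t ∈ P | inversionParity cs v t ≠ 0}
  have hu : x * v * x⁻¹ ∈ stdParabolic cs I := (hPx v).mp hv
  have hconj (t : W) : x * (x⁻¹ * t * x) * x⁻¹ = t := by group
  have hclosure : Subgroup.closure {t | inversionParity cs (x * v * x⁻¹) t ≠ 0} ≤
      (Subgroup.closure T).comap (MulAut.conj x⁻¹).toMonoidHom := by
    refine (Subgroup.closure_le _).mpr fun t ht ↦ ?_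
    have htI := mem_stdParabolic_of_inversionParity_ne_zero cs hu ht
    have htT : x⁻¹ * t * x ∈ T := by
      refine ⟨(hPx _).mpr ((hconj t).symm ▸ htI), ?_⟩
      rwa [← inversionParity_conj_of_forall_length_le cs hx hu htI]
    simpa using! Subgroup.subset_closure htT
  simpa [mul_assoc] using hclosure (mem_closure_inversionParity_ne_zero cs _)

lemma simple_mem_of_wordProd_cons_mem_closure {b : B} {ω : List B} (hb : b ∉ ω) {T : Set W}
    (hT : ∀ t ∈ T, t ∈ cs.leftInvSeq (b :: ω))
    (h : cs.wordProd (b :: ω) ∈ Subgroup.closure T) : cs.simple b ∈ T := by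
  by_contra hbT
  set K := stdParabolic cs {i | i ∈ ω}
  have hTK : Subgroup.closure T ≤ K.map (MulAut.conj (cs.simple b)).toMonoidHom := by
    refine (Subgroup.closure_le _).mpr fun t ht ↦ ?_
    have htb := hT t ht
    rw [leftInvSeq, List.mem_cons, List.mem_map] at htb
    obtain rfl | ⟨r, hr, rfl⟩ := htb
    · exact absurd ht hbT
    · exact Subgroup.mem_map_of_mem _ (mem_stdParabolic_of_mem_leftInvSeq cs (fun _ ↦ id) hr)
  obtain ⟨k, hk, hkb⟩ := hTK h
  have hω : cs.wordProd ω ∈ K := wordProd_mem_stdParabolic cs fun _ ↦ id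
  have hωk : cs.wordProd ω = k * cs.simple b := by
    simpa [mul_assoc, cs.wordProd_cons] using! hkb.symm
  exact hb ((simple_mem_stdParabolic_iff cs).mp ((K.mul_mem_cancel_left hk).mp (hωk ▸ hω)))

variable {cs} in
lemma simple_mem_of_wordProd_mem_of_isParabolic {P : Subgroup W} (hP : IsParabolic cs P)
    {l : List B} (hl : l.Nodup) (h : cs.wordProd l ∈ P) {b : B} (hb : b ∈ l) :
    cs.simple b ∈ P := by
  induction l with
  | nil => simp at hb
  | cons i ω ih =>
    obtain ⟨hi, hω⟩ := List.nodup_cons.mp hl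
    have hiP : cs.simple i ∈ P :=
      (simple_mem_of_wordProd_cons_mem_closure cs hi
        (fun _ ht ↦ mem_leftInvSeq_of_inversionParity_ne_zero cs ht.2)
        (mem_closure_inversions_of_isParabolic hP h)).1
    obtain rfl | hbω := List.mem_cons.mp hb
    · exact hiP
    · rw [cs.wordProd_cons, P.mul_mem_cancel_left hiP] at h
      exact ih hω h hbω

end ParabolicClosure

end CoxeterParabolic

/-- If `w` is the product, in some order, of the pairwise distinct elements of `J ⊆ S`, then
the parabolic closure of `w` is `W_J`: that is, `w ∈ W_J` and every parabolic subgroup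
containing `w` contains `W_J`. -/
theorem stmt_11 {B W : Type*} [Group W] {M : CoxeterMatrix B} (cs : CoxeterSystem M W)
    (l : List B) (hnd : l.Nodup) (J : Set B) (hJ : ∀ b : B, b ∈ l ↔ b ∈ J) :
    cs.wordProd l ∈ stdParabolic cs J ∧
      ∀ P : Subgroup W, IsParabolic cs P → cs.wordProd l ∈ P → stdParabolic cs J ≤ P := by
  refine ⟨CoxeterParabolic.wordProd_mem_stdParabolic cs fun b ↦ (hJ b).mp, fun P hP hw ↦ ?_⟩
  refine (Subgroup.closure_le P).mpr (Set.forall_mem_image.mpr fun b hb ↦ ?_)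
  exact CoxeterParabolic.simple_mem_of_wordProd_mem_of_isParabolic hP hnd hw ((hJ b).mpr hb)
end

section
/- Let (W, S) be a Coxeter system with w = s₁s₂⋯sₙ a reduced word, and set rᵢ = s₁s₂⋯s_{i-1} sᵢ s_{i-1}⋯s₁ for i = 1, ..., n. Then for any reflection subgroup G ≤ W containing w, the element w lies in the subgroup generated by G ∩ {r₁, ..., rₙ}. -/
/-- A reflection subgroup of a Coxeter system is a subgroup generated by reflections. -/
def IsReflectionSubgroup {B W : Type*} [Group W] {M : CoxeterMatrix B}
    (cs : CoxeterSystem M W) (G : Subgroup W) : Prop :=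
  ∃ R : Set W, (∀ r ∈ R, cs.IsReflection r) ∧ G = Subgroup.closure R

/-!
Fold a gallery from `1` along every wall it meets whose reflection lies in `G`. The unfolding
element is a product of those reflections, and the folded gallery ends in the same `G`-coset as
the original one. Folding respects the braid relations, so its end point depends only on the
end point of the original gallery. The gallery of a reflection `p s p⁻¹ ∈ G` walks along `p`, is
folded at its middle and walks back, so it ends at `1`; hence so does every gallery ending in a
reflection subgroup `G`. For `w ∈ G` the unfolding element is therefore `w` itself.
-/

section CosetFold

variable {W : Type*} [Group W] {G : Subgroup W} {a b : W}

theorem smul_mk_eq_self_iff {a x : W} : a • (x : W ⧸ G) = x ↔ x⁻¹ * a * x ∈ G := by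
  rw [eq_comm, MulAction.Quotient.smul_coe, QuotientGroup.eq, smul_eq_mul, mul_assoc]

variable (G) in
open scoped Classical in
/-- One step of a gallery folded along the walls of `G`: left multiplication by `a`, unless this
would preserve the left coset of `G`. The coset condition says `x⁻¹ * a * x ∈ G`, that is, the
wall between `x` and `a * x` belongs to `G`; chambers being extended on the left, walls are
identified with right inversions. -/
noncomputable def cosetFold (a x : W) : W :=
  if a • (x : W ⧸ G) = x then x else a * x

theorem cosetFold_of_smul_eq {x : W} (h : a • (x : W ⧸ G) = x) : cosetFold G a x = x :=
  if_pos h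

theorem cosetFold_of_smul_ne {x : W} (h : a • (x : W ⧸ G) ≠ x) : cosetFold G a x = a * x :=
  if_neg h

theorem mk_cosetFold (a x : W) : ((cosetFold G a x : W) : W ⧸ G) = a • (x : W ⧸ G) := by
  by_cases h : a • (x : W ⧸ G) = x
  · rw [cosetFold_of_smul_eq h, h]
  · rw [cosetFold_of_smul_ne h]
    rfl

theorem cosetFold_involutive (ha : a * a = 1) : Function.Involutive (cosetFold G a) := by
  intro x
  by_cases hx : a • (x : W ⧸ G) = x
  · rw [cosetFold_of_smul_eq hx, cosetFold_of_smul_eq hx]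
  · have hax : a • ((a * x : W) : W ⧸ G) ≠ (a * x : W) := fun h ↦ hx (smul_left_cancel a h)
    rw [cosetFold_of_smul_ne hx, cosetFold_of_smul_ne hax, ← mul_assoc, ha, one_mul]

variable (G) in
/-- The folding step of an involution `a`, as a permutation. -/
noncomputable def cosetFoldPerm (ha : a * a = 1) : Equiv.Perm W :=
  (cosetFold_involutive (G := G) ha).toPerm

theorem cosetFoldPerm_apply (ha : a * a = 1) (x : W) : cosetFoldPerm G ha x = cosetFold G a x :=
  rfl

theorem cosetFoldPerm_mul_self (ha : a * a = 1) : cosetFoldPerm G ha * cosetFoldPerm G ha = 1 :=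
  Equiv.ext (cosetFold_involutive ha)

theorem mk_cosetFoldPerm_mul_pow (ha : a * a = 1) (hb : b * b = 1) (k : ℕ) (x : W) :
    ((((cosetFoldPerm G ha * cosetFoldPerm G hb) ^ k) x : W) : W ⧸ G) =
      (a * b) ^ k • (x : W ⧸ G) := by
  induction k with
  | zero => simp
  | succ k ih =>
    simp only [pow_succ', Equiv.Perm.mul_apply, cosetFoldPerm_apply, mk_cosetFold, ih, mul_smul]

theorem mul_pow_mul_of_mul_self_eq_one {H : Type*} [Group H] {a b : H} (ha : a * a = 1)
    (hb : b * b = 1) (k : ℕ) : a * (a * b) ^ k = ((a * b) ^ k)⁻¹ * a := by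
  have h : SemiconjBy a (a * b) (a * b)⁻¹ := by
    rw [SemiconjBy, mul_inv_rev, inv_eq_of_mul_eq_one_left ha, inv_eq_of_mul_eq_one_left hb,
      ← mul_assoc, mul_assoc b, ha, one_mul, mul_one]
  simpa only [inv_pow] using (h.pow_right k).eq

theorem smul_mul_pow_smul_eq_inv_smul {H X : Type*} [Group H] [MulAction H X] {a b : H}
    (ha : a * a = 1) (hb : b * b = 1) {x : X} (hx : a • x = x) (k : ℕ) :
    a • (a * b) ^ k • x = ((a * b) ^ k)⁻¹ • x := by
  rw [smul_smul, mul_pow_mul_of_mul_self_eq_one ha hb, mul_smul, hx]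

/-- By the reflection symmetry of the walk around `x`, the walk also stalls half-way through the
braid word; from there it retraces its steps. -/
theorem cosetFoldPerm_mul_pow_apply_of_smul_eq (ha : a * a = 1) (hb : b * b = 1) {m : ℕ}
    (hab : (a * b) ^ m = 1) {x : W} (hx : a • (x : W ⧸ G) = x) :
    ((cosetFoldPerm G ha * cosetFoldPerm G hb) ^ m) x = x := by
  set σ := cosetFoldPerm G ha
  set τ := cosetFoldPerm G hb
  have reflect_walk (k : ℕ) : σ (((σ * τ) ^ k) x) = ((σ * τ) ^ k)⁻¹ x :=
    smul_mul_pow_smul_eq_inv_smul (cosetFoldPerm_mul_self ha) (cosetFoldPerm_mul_self hb)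
      (cosetFold_of_smul_eq hx) k
  obtain ⟨k, rfl | rfl⟩ := m.even_or_odd'
  · have stall : σ (((σ * τ) ^ k) x) = ((σ * τ) ^ k) x := by
      refine cosetFold_of_smul_eq ?_
      rw [mk_cosetFoldPerm_mul_pow, smul_mul_pow_smul_eq_inv_smul ha hb hx,
        inv_eq_of_mul_eq_one_left]
      rw [← pow_add, ← two_mul, hab]
    rw [two_mul, pow_add, Equiv.Perm.mul_apply, ← stall, reflect_walk,
      ← Equiv.Perm.mul_apply, mul_inv_cancel, Equiv.Perm.one_apply]
  · have stall : τ (((σ * τ) ^ k) x) = ((σ * τ) ^ k) x := by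
      refine cosetFold_of_smul_eq ?_
      have hb_eq : b = a * (a * b) := by rw [← mul_assoc, ha, one_mul]
      rw [mk_cosetFoldPerm_mul_pow]
      nth_rw 1 [hb_eq]
      rw [mul_smul, smul_smul (a * b), ← pow_succ', smul_mul_pow_smul_eq_inv_smul ha hb hx,
        inv_eq_of_mul_eq_one_left]
      rw [← pow_add, ← hab, two_mul, add_assoc]
    rw [two_mul, add_assoc, pow_add, pow_succ' _ k, Equiv.Perm.mul_apply,
      Equiv.Perm.mul_apply, Equiv.Perm.mul_apply σ, stall, reflect_walk,
      ← Equiv.Perm.mul_apply, mul_inv_cancel, Equiv.Perm.one_apply]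

theorem cosetFoldPerm_mul_pow_apply_of_forall_smul_ne (ha : a * a = 1) (hb : b * b = 1) {x : W}
    (hfree : ∀ k : ℕ, a • (a * b) ^ k • (x : W ⧸ G) ≠ (a * b) ^ k • (x : W ⧸ G) ∧
      b • (a * b) ^ k • (x : W ⧸ G) ≠ (a * b) ^ k • (x : W ⧸ G)) (k : ℕ) :
    ((cosetFoldPerm G ha * cosetFoldPerm G hb) ^ k) x = (a * b) ^ k * x := by
  induction k with
  | zero => simp
  | succ k ih =>
    have b_step : cosetFold G b ((a * b) ^ k * x) = b * ((a * b) ^ k * x) :=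
      cosetFold_of_smul_ne (hfree k).2
    have a_step : cosetFold G a (b * ((a * b) ^ k * x)) = a * (b * ((a * b) ^ k * x)) := by
      refine cosetFold_of_smul_ne fun h ↦ (hfree (k + 1)).1 ?_
      rw [pow_succ', mul_smul, mul_smul]
      exact congrArg (a • ·) h
    rw [pow_succ', Equiv.Perm.mul_apply, ih, Equiv.Perm.mul_apply, cosetFoldPerm_apply,
      cosetFoldPerm_apply, b_step, a_step, pow_succ', mul_assoc (a * b), mul_assoc a b]

theorem cosetFoldPerm_mul_pow_eq_one (ha : a * a = 1) (hb : b * b = 1) {m : ℕ}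
    (hab : (a * b) ^ m = 1) : (cosetFoldPerm G ha * cosetFoldPerm G hb) ^ m = 1 := by
  ext x
  by_cases hfree : ∀ k : ℕ, a • (a * b) ^ k • (x : W ⧸ G) ≠ (a * b) ^ k • (x : W ⧸ G) ∧
      b • (a * b) ^ k • (x : W ⧸ G) ≠ (a * b) ^ k • (x : W ⧸ G)
  · rw [cosetFoldPerm_mul_pow_apply_of_forall_smul_ne ha hb hfree, hab, one_mul,
      Equiv.Perm.one_apply]
  set ρ := cosetFoldPerm G ha * cosetFoldPerm G hb
  obtain ⟨k, hk⟩ := not_forall.1 hfree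
  suffices h : (ρ ^ m) ((ρ ^ k) x) = (ρ ^ k) x by
    rw [← Equiv.Perm.mul_apply, ((Commute.refl ρ).pow_pow m k).eq, Equiv.Perm.mul_apply] at h
    exact (ρ ^ k).injective h
  rw [← mk_cosetFoldPerm_mul_pow ha hb, not_and_or, not_not, not_not] at hk
  rcases hk with hk | hk
  · exact cosetFoldPerm_mul_pow_apply_of_smul_eq ha hb hab hk
  · have hba : (b * a) ^ m = 1 := by
      rw [← inv_eq_of_mul_eq_one_left ha, ← inv_eq_of_mul_eq_one_left hb, ← mul_inv_rev, inv_pow,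
        hab, inv_one]
    have h := cosetFoldPerm_mul_pow_apply_of_smul_eq hb ha hba hk
    have hρ_inv : cosetFoldPerm G hb * cosetFoldPerm G ha = ρ⁻¹ := rfl
    rwa [hρ_inv, inv_pow, Equiv.Perm.inv_eq_iff_eq, eq_comm] at h

end CosetFold

section FoldHom

variable {B W : Type*} [Group W] {M : CoxeterMatrix B} (cs : CoxeterSystem M W) (G : Subgroup W)

theorem isLiftable_cosetFoldPerm :
    M.IsLiftable fun i ↦ cosetFoldPerm G (cs.simple_mul_simple_self i) :=
  fun i j ↦ cosetFoldPerm_mul_pow_eq_one _ _ (cs.simple_mul_simple_pow i j)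

/-- The action of `W` on itself by folding: the image of `s₁ ⋯ sₙ` sends `x` to the end of the
gallery of type `sₙ, …, s₁` from `x`, folded along the walls of `G`. -/
noncomputable def foldHom : W →* Equiv.Perm W :=
  cs.lift ⟨fun i ↦ cosetFoldPerm G (cs.simple_mul_simple_self i),
    isLiftable_cosetFoldPerm cs G⟩

theorem foldHom_simple_apply (i : B) (x : W) :
    foldHom cs G (cs.simple i) x = cosetFold G (cs.simple i) x := by
  rw [foldHom, cs.lift_apply_simple, cosetFoldPerm_apply]

theorem foldHom_simple_mul_apply (i : B) (w x : W) :
    foldHom cs G (cs.simple i * w) x = cosetFold G (cs.simple i) (foldHom cs G w x) := by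
  rw [map_mul, Equiv.Perm.mul_apply, foldHom_simple_apply]

theorem mk_foldHom_apply (w x : W) :
    ((foldHom cs G w x : W) : W ⧸ G) = w • (x : W ⧸ G) := by
  induction w using cs.simple_induction_left with
  | one => simp
  | mul_simple_left w i ih => rw [foldHom_simple_mul_apply, mk_cosetFold, ih, mul_smul]

variable {cs G} in
theorem foldHom_apply_of_isReflection {t x : W} (ht : cs.IsReflection t)
    (hx : t • (x : W ⧸ G) = x) : foldHom cs G t x = x := by
  obtain ⟨p, i, rfl⟩ := ht
  have fold_middle : cosetFold G (cs.simple i) (foldHom cs G p⁻¹ x) = foldHom cs G p⁻¹ x := by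
    refine cosetFold_of_smul_eq ?_
    rw [mk_foldHom_apply, smul_smul, eq_inv_smul_iff, smul_smul, ← mul_assoc, hx]
  rw [mul_assoc, map_mul, Equiv.Perm.mul_apply, foldHom_simple_mul_apply, fold_middle,
    ← Equiv.Perm.mul_apply, ← map_mul, mul_inv_cancel, map_one, Equiv.Perm.one_apply]

variable {cs G} in
theorem IsReflectionSubgroup.foldHom_apply_one (hG : IsReflectionSubgroup cs G) {w : W}
    (hw : w ∈ G) : foldHom cs G w 1 = 1 := by
  obtain ⟨R, hR, hGR⟩ := hG
  suffices h : G ≤ (MulAction.stabilizer (Equiv.Perm W) (1 : W)).comap (foldHom cs G) from h hw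
  rw [hGR, Subgroup.closure_le, ← hGR]
  refine fun r hr ↦ foldHom_apply_of_isReflection (hR r hr) ?_
  have hrG : r ∈ G := hGR ▸ Subgroup.subset_closure hr
  rwa [smul_mk_eq_self_iff, inv_one, one_mul, mul_one]

theorem foldHom_apply_one_inv_mul_mem_closure (l : List B) :
    (foldHom cs G (cs.wordProd l) 1)⁻¹ * cs.wordProd l ∈
      Subgroup.closure {t : W | t ∈ cs.rightInvSeq l ∧ t ∈ G} := by
  induction l with
  | nil => simp
  | cons i l ih =>
    have unfold_mem : (foldHom cs G (cs.wordProd l) 1)⁻¹ * cs.wordProd l ∈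
        Subgroup.closure {t : W | t ∈ cs.rightInvSeq (i :: l) ∧ t ∈ G} :=
      Subgroup.closure_mono (fun _ ↦ And.imp_left (List.mem_cons_of_mem _)) ih
    rw [cs.wordProd_cons, foldHom_simple_mul_apply]
    set w := cs.wordProd l
    set d := foldHom cs G w 1 with hd
    by_cases hfold : cs.simple i • (d : W ⧸ G) = d
    · have wall_mem : w⁻¹ * cs.simple i * w ∈ G := by
        rwa [hd, mk_foldHom_apply, MulAction.Quotient.smul_coe, smul_eq_mul, mul_one,
          smul_mk_eq_self_iff] at hfold
      have crossed_mem : w⁻¹ * cs.simple i * w ∈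
          Subgroup.closure {t : W | t ∈ cs.rightInvSeq (i :: l) ∧ t ∈ G} :=
        Subgroup.subset_closure ⟨List.mem_cons_self, wall_mem⟩
      rw [cosetFold_of_smul_eq hfold]
      convert mul_mem unfold_mem crossed_mem using 1
      group
    · rw [cosetFold_of_smul_ne hfold, mul_inv_rev, mul_assoc, cs.inv_simple,
        cs.simple_mul_simple_cancel_left]
      exact unfold_mem

end FoldHom

theorem stmt_13_general {B W : Type*} [Group W] {M : CoxeterMatrix B} (cs : CoxeterSystem M W)
    (l : List B) (G : Subgroup W) (hG : IsReflectionSubgroup cs G) (hw : cs.wordProd l ∈ G) :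
    cs.wordProd l ∈ Subgroup.closure {t : W | t ∈ cs.leftInvSeq l ∧ t ∈ G} := by
  have hw_inv : cs.wordProd l.reverse ∈ G := by
    rw [cs.wordProd_reverse]
    exact inv_mem hw
  have h := foldHom_apply_one_inv_mul_mem_closure cs G l.reverse
  rw [hG.foldHom_apply_one hw_inv, inv_one, one_mul, cs.wordProd_reverse, inv_mem_iff] at h
  simpa only [cs.rightInvSeq_reverse, List.mem_reverse] using h

/-- If `w = s₁ ⋯ sₙ` is reduced and `rᵢ = s₁ ⋯ s_{i-1} sᵢ s_{i-1} ⋯ s₁` (the left inversion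
sequence), then for any reflection subgroup `G` containing `w`, the element `w` lies in the
subgroup generated by `G ∩ {r₁, …, rₙ}`. -/
theorem stmt_13 {B W : Type*} [Group W] {M : CoxeterMatrix B} (cs : CoxeterSystem M W)
    (l : List B) (hred : cs.IsReduced l) (G : Subgroup W)
    (hG : IsReflectionSubgroup cs G) (hw : cs.wordProd l ∈ G) :
    cs.wordProd l ∈ Subgroup.closure {t : W | t ∈ cs.leftInvSeq l ∧ t ∈ G} :=
  stmt_13_general cs l G hG hw
end

section
/- Let W be an infinite irreducible Coxeter group of finite rank and let x ∈ W be essential (i.e., its parabolic closure is all of W). Then for every positive integer m, the power x^m is also essential in W. -/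
/-- A Coxeter matrix is irreducible if the index set does not split into two nonempty
pairwise-commuting parts. -/
def CoxIrreducible {B : Type*} (M : CoxeterMatrix B) : Prop :=
  ∀ I : Set B, (∀ i ∈ I, ∀ j ∉ I, M i j = 2) → I = ∅ ∨ I = Set.univ

/-- An element is essential if no proper parabolic subgroup contains it. -/
def Essential {B W : Type*} [Group W] {M : CoxeterMatrix B}
    (cs : CoxeterSystem M W) (x : W) : Prop :=
  ∀ P : Subgroup W, IsParabolic cs P → x ∈ P → P = ⊤

/-!
Let `W` act on the dual of its geometric representation. The stabilizers of the points of the Tits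
cone are exactly the parabolic subgroups, and since `W` is infinite and irreducible the cone
contains no line. If `x ^ m` lies in a proper parabolic subgroup, it fixes some `ξ ≠ 0` in the cone.
The sum `ξ + x • ξ + ⋯ + x ^ (m - 1) • ξ` is then fixed by `x`, and it is not zero because the cone
contains no line. Its stabilizer is a proper parabolic subgroup containing `x`.
-/

namespace GeometricRepresentation

open CoxeterSystem Finsupp Module Polynomial.Chebyshev Real

section Trigonometry

lemma sin_pi_div_pos {n : ℕ} (hn : 2 ≤ n) : 0 < sin (π / n) := by
  have hn' : (1 : ℝ) < n := by exact_mod_cast hn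
  exact sin_pos_of_pos_of_lt_pi (by positivity) (div_lt_self pi_pos hn')

lemma sin_two_pi_div_pos {n : ℕ} (hn : 3 ≤ n) : 0 < sin (2 * π / n) := by
  have hn' : (3 : ℝ) ≤ n := by exact_mod_cast hn
  refine sin_pos_of_pos_of_lt_pi (by positivity) ((div_lt_iff₀ (by positivity)).mpr ?_)
  nlinarith [pi_pos]

lemma cos_pi_div_pos {n : ℕ} (hn : n ≠ 1) (hn2 : n ≠ 2) : 0 < cos (π / n) := by
  rcases Nat.eq_zero_or_pos n with rfl | hpos
  · simp
  · have hn' : (2 : ℝ) < n := by exact_mod_cast (by omega : 2 < n)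
    have : π / n < π / 2 := by gcongr
    have : 0 ≤ π / n := by positivity
    exact cos_pos_of_mem_Ioo ⟨by linarith, by linarith⟩

/- The Chebyshev values are `sin (k * (π / n)) / sin (π / n)`, and `k` when `n = 0`, since then
`π / n = 0`. -/
lemma eval_S_sub_one_nonneg {n k : ℕ} (h : n = 0 ∨ k ≤ n) :
    0 ≤ (S ℝ (k - 1)).eval (2 * cos (π / n)) := by
  rcases Nat.lt_or_ge n 2 with hn | hn
  · interval_cases n
    · simp [S_eval_two]
    · obtain rfl | rfl : k = 0 ∨ k = 1 := by omega
      all_goals simp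
  · have hk : (k : ℝ) ≤ n := by exact_mod_cast (by omega : k ≤ n)
    have hsin := S_two_mul_real_cos (π / n) (k - 1)
    push_cast at hsin
    rw [sub_add_cancel] at hsin
    have hnonneg : 0 ≤ sin (k * (π / n)) := by
      refine sin_nonneg_of_nonneg_of_le_pi (by positivity) ?_
      calc k * (π / n) ≤ n * (π / n) := by gcongr
        _ = π := by field_simp
    exact nonneg_of_mul_nonneg_left (hsin ▸ hnonneg) (sin_pi_div_pos hn)

lemma eval_S_sub_one_eq_zero_of_even {n k : ℕ} (hn : 3 ≤ n) (hnk : n = 2 * k) :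
    (S ℝ (k - 1)).eval (2 * cos (2 * π / n)) = 0 := by
  have hsin := S_two_mul_real_cos (2 * π / n) (k - 1)
  have hangle : ((k - 1 : ℤ) + 1 : ℝ) * (2 * π / n) = π := by
    have : (k : ℝ) ≠ 0 := by exact_mod_cast (by omega : k ≠ 0)
    rw [hnk]; push_cast; field_simp; ring
  rw [hangle, sin_pi] at hsin
  exact (mul_eq_zero.mp hsin).resolve_right (sin_two_pi_div_pos hn).ne'

lemma eval_S_add_eval_S_eq_zero_of_odd {n k : ℕ} (hn : 3 ≤ n) (hnk : n = 2 * k + 1) :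
    (S ℝ k).eval (2 * cos (2 * π / n)) + (S ℝ (k - 1)).eval (2 * cos (2 * π / n)) = 0 := by
  refine (mul_eq_zero.mp ?_).resolve_right (sin_two_pi_div_pos hn).ne'
  have hangle : (k + 1 : ℝ) * (2 * π / n) = 2 * π - k * (2 * π / n) := by
    rw [hnk]; push_cast; field_simp; ring
  rw [add_mul, S_two_mul_real_cos, S_two_mul_real_cos]
  push_cast
  rw [hangle, sin_two_pi_sub, sub_add_cancel, neg_add_cancel]

end Trigonometry

section DihedralRotation

variable {V : Type*} [AddCommGroup V] [Module ℝ V] {x y : V} {f g : Dual ℝ V}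

theorem reflection_mul_reflection_pow_eq_one (hf : f x = 2) (hg : g y = 2) {n : ℕ} (hn : n ≠ 1)
    (hfy : f y = -(2 * cos (π / n))) (hgx : g x = -(2 * cos (π / n))) :
    (reflection hf * reflection hg) ^ n = 1 := by
  ext z
  rcases Nat.lt_or_ge n 3 with hn3 | hn3
  · interval_cases n
    · rfl
    · exact absurd rfl hn
    · have hfy0 : f y = 0 := by simp [hfy]
      have hgx0 : g x = 0 := by simp [hgx]
      simp only [pow_two, LinearEquiv.mul_apply, reflection_apply, map_sub, map_smul, hf, hg, hfy0,
        hgx0, LinearEquiv.coe_one, id_eq]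
      module
  · have ht : 2 * cos (2 * π / n) = f y * g x - 2 := by
      rw [hfy, hgx, mul_div_assoc, cos_two_mul]; ring
    rw [reflection_mul_reflection_pow_apply hf hg n z _ ht]
    rcases Nat.even_or_odd' n with ⟨k, hk | hk⟩
    · have hS := eval_S_sub_one_eq_zero_of_even hn3 hk
      rw [show ((n : ℤ) - 2) / 2 = k - 1 by omega, show ((n : ℤ) - 1) / 2 = k - 1 by omega, hS]
      simp
    · have hS := eval_S_add_eval_S_eq_zero_of_odd hn3 hk
      rw [show ((n : ℤ) - 2) / 2 = k - 1 by omega, show ((n : ℤ) - 1) / 2 = k by omega,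
        show ((n : ℤ) - 3) / 2 = k - 1 by omega, show (n : ℤ) / 2 = k by omega, hS]
      simp

end DihedralRotation

section Definition

variable {B : Type*} (M : CoxeterMatrix B)

/-- The simple root `α i` of the geometric representation, which lives on `B →₀ ℝ`. -/
noncomputable abbrev simpleRoot (i : B) : B →₀ ℝ := single i 1

/-- The Tits form of a Coxeter matrix. An infinite entry of `M` is encoded by `M i j = 0`; then
`π / M i j = 0`, and the form takes its standard value `-1`. -/
noncomputable def titsForm : LinearMap.BilinForm ℝ (B →₀ ℝ) :=
  linearCombination ℝ fun i => linearCombination ℝ fun j => -cos (π / M i j)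

lemma titsForm_simpleRoot (i j : B) :
    titsForm M (simpleRoot i) (simpleRoot j) = -cos (π / M i j) := by
  simp [titsForm]

lemma titsForm_simpleRoot_self (i : B) : titsForm M (simpleRoot i) (simpleRoot i) = 1 := by
  simp [titsForm_simpleRoot]

lemma titsForm_isSymm : (titsForm M).IsSymm := by
  refine LinearMap.BilinForm.isSymm_iff_flip.mpr ?_
  ext i j
  simp [titsForm, M.symmetric i j]

lemma isReflective_simpleRoot (i : B) : (titsForm M).IsReflective (simpleRoot i) :=
  .of_dvd_two _ (by simp [titsForm_simpleRoot_self])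

/-- The reflection of `B →₀ ℝ` in the simple root `α i`, with respect to the Tits form. -/
noncomputable def simpleReflection (i : B) : (B →₀ ℝ) ≃ₗ[ℝ] (B →₀ ℝ) :=
  reflection (isReflective_simpleRoot M i).coroot_apply_self

lemma coroot_simpleRoot (i : B) :
    (isReflective_simpleRoot M i).coroot = 2 • titsForm M (simpleRoot i) := by
  simpa [titsForm_simpleRoot_self] using
    LinearMap.IsReflective.smul_coroot (titsForm M) (isReflective_simpleRoot M i)

lemma simpleReflection_apply (i : B) (v : B →₀ ℝ) :
    simpleReflection M i v = v - (2 * titsForm M (simpleRoot i) v) • simpleRoot i := by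
  simp [simpleReflection, reflection_apply, coroot_simpleRoot]

lemma simpleReflection_mul_pow_eq_one (i j : B) :
    (simpleReflection M i * simpleReflection M j) ^ M i j = 1 := by
  obtain rfl | hij := eq_or_ne i j
  · rw [M.diagonal, pow_one]
    exact mul_eq_one_iff_eq_inv.mpr rfl
  · refine reflection_mul_reflection_pow_eq_one _ _ (M.off_diagonal i j hij) ?_ ?_
    · simp [coroot_simpleRoot, titsForm_simpleRoot]
    · simp [coroot_simpleRoot, titsForm_simpleRoot, M.symmetric j i]

end Definition

section Representation

variable {B W : Type*} [Group W] {M : CoxeterMatrix B} (cs : CoxeterSystem M W)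

/-- The geometric (Tits) representation of a Coxeter group on `B →₀ ℝ`. -/
noncomputable def geomRep : Representation ℝ W (B →₀ ℝ) :=
  LinearEquiv.automorphismGroup.toLinearMapMonoidHom.comp
    (cs.lift ⟨simpleReflection M, simpleReflection_mul_pow_eq_one M⟩)

lemma geomRep_simple_apply (i : B) (v : B →₀ ℝ) :
    geomRep cs (cs.simple i) v = v - (2 * titsForm M (simpleRoot i) v) • simpleRoot i := by
  rw [← simpleReflection_apply]
  exact LinearEquiv.congr_fun (cs.lift_apply_simple (simpleReflection_mul_pow_eq_one M) i) v

lemma geomRep_simple_simpleRoot (i j : B) :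
    geomRep cs (cs.simple i) (simpleRoot j) =
      simpleRoot j + (2 * cos (π / M i j)) • simpleRoot i := by
  rw [geomRep_simple_apply, titsForm_simpleRoot]
  module

lemma geomRep_simple_simpleRoot_self (i : B) :
    geomRep cs (cs.simple i) (simpleRoot i) = -simpleRoot i := by
  rw [geomRep_simple_simpleRoot, M.diagonal, Nat.cast_one, div_one, cos_pi]
  module

lemma geomRep_mul_apply (w w' : W) (v : B →₀ ℝ) :
    geomRep cs (w * w') v = geomRep cs w (geomRep cs w' v) := by
  rw [map_mul, End.mul_apply]

lemma geomRep_simple_cancel (i : B) (v : B →₀ ℝ) :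
    geomRep cs (cs.simple i) (geomRep cs (cs.simple i) v) = v := by
  rw [← geomRep_mul_apply, cs.simple_mul_simple_self, map_one, End.one_apply]

lemma titsForm_geomRep (w : W) (u v : B →₀ ℝ) :
    titsForm M (geomRep cs w u) (geomRep cs w v) = titsForm M u v := by
  induction w using cs.simple_induction generalizing u v with
  | simple i =>
    have hs : (titsForm M).IsOrthogonal (simpleReflection M i) :=
      LinearMap.IsReflective.isOrthogonal_reflection _ _
        (LinearMap.BilinForm.isSymm_iff.mp (titsForm_isSymm M))
    simp only [geomRep_simple_apply, ← simpleReflection_apply]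
    exact hs u v
  | one => simp
  | mul w w' hw hw' => rw [geomRep_mul_apply, geomRep_mul_apply, hw, hw']

end Representation

section AlternatingWords

variable {B W : Type*} [Group W] {M : CoxeterMatrix B} (cs : CoxeterSystem M W)

lemma not_isRightDescent_of_length_mul_wordProd_cons {v : W} {i : B} {ω : List B}
    (h : cs.length (v * cs.wordProd (i :: ω)) = cs.length v + ω.length + 1) :
    ¬cs.IsRightDescent v i := by
  have h1 := cs.length_mul_le (v * cs.simple i) (cs.wordProd ω)
  have h2 := cs.length_wordProd_le ω
  rw [mul_assoc, ← cs.wordProd_cons] at h1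
  rw [IsRightDescent]
  lia

lemma isReduced_of_length_mul_wordProd {v : W} {ω : List B}
    (h : cs.length (v * cs.wordProd ω) = cs.length v + ω.length) : cs.IsReduced ω := by
  have h1 := cs.length_mul_le v (cs.wordProd ω)
  have h2 := cs.length_wordProd_le ω
  rw [CoxeterSystem.IsReduced]
  lia

/- Take the longest alternating suffix that splits off `w` with lengths adding up. -/
lemma exists_mul_wordProd_alternatingWord_eq {w : W} {i : B} (hi : ¬cs.IsRightDescent w i) (j : B) :
    ∃ (v : W) (k : ℕ), v * cs.wordProd (alternatingWord i j k) = w ∧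
      cs.length w = cs.length v + k ∧ ¬cs.IsRightDescent v i ∧ ¬cs.IsRightDescent v j := by
  let splits (k : ℕ) : Prop := ∃ v, v * cs.wordProd (alternatingWord i j k) = w ∧
    cs.length w = cs.length v + k
  have hzero : splits 0 := ⟨w, by simp [alternatingWord]⟩
  classical
  obtain ⟨v, hvw, hlen⟩ := Nat.findGreatest_spec (P := splits) (Nat.zero_le (cs.length w)) hzero
  set k := Nat.findGreatest splits (cs.length w)
  have hnext : ¬cs.IsRightDescent v (if Even k then j else i) := by
    intro hdesc
    have hlen' := cs.isRightDescent_iff.mp hdesc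
    refine Nat.findGreatest_is_greatest (P := splits) (k := k + 1) (Nat.lt_succ_self k) (by lia)
      ⟨v * cs.simple (if Even k then j else i), ?_, by lia⟩
    rw [alternatingWord_succ', cs.wordProd_cons, ← mul_assoc, cs.simple_mul_simple_cancel_right,
      hvw]
  have hfirst : ¬cs.IsRightDescent v (if Even k then i else j) := by
    clear_value k
    cases k with
    | zero => simpa [← hvw, alternatingWord] using hi
    | succ k =>
      rw [alternatingWord_succ'] at hvw
      convert not_isRightDescent_of_length_mul_wordProd_cons cs (hvw ▸ hlen.trans ?_) using 2
      · simp only [Nat.even_add_one, ite_not]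
      · simp [add_assoc]
  refine ⟨v, k, hvw, hlen, ?_⟩
  split_ifs at hnext hfirst with heven
  exacts [⟨hfirst, hnext⟩, ⟨hnext, hfirst⟩]

/- The Chebyshev coefficients come from the recursion `S (k + 1) = X * S k - S (k - 1)`, which is
what one more reflection does to a vector in the plane of `α i` and `α j`. -/
lemma geomRep_wordProd_alternatingWord (i j : B) (k : ℕ) :
    geomRep cs (cs.wordProd (alternatingWord i j k)) (simpleRoot i) =
      if Even k then
        (S ℝ k).eval (2 * cos (π / M i j)) • simpleRoot i +
          (S ℝ (k - 1)).eval (2 * cos (π / M i j)) • simpleRoot j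
      else
        (S ℝ (k - 1)).eval (2 * cos (π / M i j)) • simpleRoot i +
          (S ℝ k).eval (2 * cos (π / M i j)) • simpleRoot j := by
  induction k with
  | zero => simp [alternatingWord]
  | succ k ih =>
    have hrec : (S ℝ (k + 1)).eval (2 * cos (π / M i j)) =
        2 * cos (π / M i j) * (S ℝ k).eval (2 * cos (π / M i j)) -
          (S ℝ (k - 1)).eval (2 * cos (π / M i j)) := by
      simp [S_add_one]
    rw [alternatingWord_succ', cs.wordProd_cons, geomRep_mul_apply, ih]
    by_cases hk : Even k
    · simp only [hk, if_true, Nat.even_add_one, not_true, if_false, map_add, map_smul,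
        geomRep_simple_simpleRoot_self, geomRep_simple_simpleRoot, M.symmetric j i]
      push_cast
      rw [hrec, add_sub_cancel_right]
      module
    · simp only [hk, if_false, Nat.even_add_one, not_false_eq_true, if_true, map_add, map_smul,
        geomRep_simple_simpleRoot_self, geomRep_simple_simpleRoot]
      push_cast
      rw [hrec, add_sub_cancel_right]
      module

lemma exists_geomRep_wordProd_alternatingWord_eq {i j : B} {k : ℕ}
    (h : M i j = 0 ∨ k + 1 ≤ M i j) :
    ∃ a b : ℝ, 0 ≤ a ∧ 0 ≤ b ∧
      geomRep cs (cs.wordProd (alternatingWord i j k)) (simpleRoot i) =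
        a • simpleRoot i + b • simpleRoot j := by
  have hpred : 0 ≤ (S ℝ (k - 1)).eval (2 * cos (π / M i j)) :=
    eval_S_sub_one_nonneg (h.imp_right (by lia))
  have hself : 0 ≤ (S ℝ k).eval (2 * cos (π / M i j)) := by
    simpa using eval_S_sub_one_nonneg h
  rw [geomRep_wordProd_alternatingWord]
  split_ifs
  exacts [⟨_, _, hself, hpred, rfl⟩, ⟨_, _, hpred, hself, rfl⟩]

end AlternatingWords

section Positivity

variable {B W : Type*} [Group W] {M : CoxeterMatrix B} (cs : CoxeterSystem M W)

lemma le_coxeterMatrix_of_isReduced_alternatingWord {i j : B} {k : ℕ}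
    (h : cs.IsReduced (alternatingWord i j k)) : M i j = 0 ∨ k ≤ M i j := by
  by_contra! hcon
  exact cs.not_isReduced_alternatingWord i j hcon.1 hcon.2 h

theorem geomRep_simpleRoot_nonneg {w : W} {i : B} (hi : ¬cs.IsRightDescent w i) :
    0 ≤ geomRep cs w (simpleRoot i) := by
  induction hn : cs.length w using Nat.strong_induction_on generalizing w i with
  | _ n ih =>
  by_cases hw : w = 1
  · simp [hw]
  obtain ⟨j, hj⟩ := cs.exists_rightDescent_of_ne_one hw
  obtain ⟨v, k, hvw, hlen, hvi, hvj⟩ := exists_mul_wordProd_alternatingWord_eq cs hi j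
  have hk : k ≠ 0 := by
    rintro rfl
    simp only [alternatingWord, wordProd_nil, mul_one] at hvw
    exact hvj (hvw ▸ hj)
  have hreduced : cs.IsReduced (alternatingWord j i (k + 1)) := by
    refine isReduced_of_length_mul_wordProd cs (v := v) ?_
    rw [alternatingWord_succ, cs.wordProd_concat, ← mul_assoc, hvw,
      cs.not_isRightDescent_iff.mp hi, List.length_concat, length_alternatingWord, hlen, add_assoc]
  obtain ⟨a, b, ha, hb, hab⟩ := exists_geomRep_wordProd_alternatingWord_eq cs
    (M.symmetric i j ▸ le_coxeterMatrix_of_isReduced_alternatingWord cs hreduced)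
  rw [← hvw, geomRep_mul_apply, hab, map_add, map_smul, map_smul]
  have hvlen : cs.length v < n := by lia
  exact add_nonneg (smul_nonneg ha (ih _ hvlen hvi rfl)) (smul_nonneg hb (ih _ hvlen hvj rfl))

theorem geomRep_simpleRoot_nonpos {w : W} {i : B} (hi : cs.IsRightDescent w i) :
    geomRep cs w (simpleRoot i) ≤ 0 := by
  have h := geomRep_simpleRoot_nonneg cs (cs.isRightDescent_iff_not_isRightDescent_mul.mp hi)
  rwa [geomRep_mul_apply, geomRep_simple_simpleRoot_self, map_neg, Left.nonneg_neg_iff] at h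

end Positivity

section Roots

variable {B W : Type*} [Group W] {M : CoxeterMatrix B} (cs : CoxeterSystem M W)

/-- The roots of a Coxeter system: the orbit of the simple roots. -/
def roots : Set (B →₀ ℝ) := {v | ∃ w i, geomRep cs w (simpleRoot i) = v}

/-- The roots with nonnegative coordinates. -/
def posRoots : Set (B →₀ ℝ) := {v ∈ roots cs | 0 ≤ v}

lemma simpleRoot_mem_posRoots (i : B) : simpleRoot i ∈ posRoots cs :=
  ⟨⟨1, i, by simp⟩, single_nonneg.mpr zero_le_one⟩

variable {cs} {v : B →₀ ℝ}

lemma geomRep_mem_roots (w : W) (hv : v ∈ roots cs) : geomRep cs w v ∈ roots cs := by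
  obtain ⟨w', i, rfl⟩ := hv
  exact ⟨w * w', i, geomRep_mul_apply cs w w' _⟩

lemma neg_mem_roots (hv : v ∈ roots cs) : -v ∈ roots cs := by
  obtain ⟨w, i, rfl⟩ := hv
  exact ⟨w * cs.simple i, i, by
    rw [geomRep_mul_apply, geomRep_simple_simpleRoot_self, map_neg]⟩

lemma mem_posRoots_or_neg_mem_posRoots (hv : v ∈ roots cs) :
    v ∈ posRoots cs ∨ -v ∈ posRoots cs := by
  obtain ⟨w, i, hwi⟩ := id hv
  by_cases hi : cs.IsRightDescent w i
  · exact .inr ⟨neg_mem_roots hv, neg_nonneg.mpr (hwi ▸ geomRep_simpleRoot_nonpos cs hi)⟩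
  · exact .inl ⟨hv, hwi ▸ geomRep_simpleRoot_nonneg cs hi⟩

lemma titsForm_self_of_mem_roots (hv : v ∈ roots cs) : titsForm M v v = 1 := by
  obtain ⟨w, i, rfl⟩ := hv
  rw [titsForm_geomRep, titsForm_simpleRoot_self]

lemma exists_ne_pos_of_mem_posRoots {i : B} (hv : v ∈ posRoots cs) (hne : v ≠ simpleRoot i) :
    ∃ j ≠ i, 0 < v j := by
  by_contra! hcon
  have hv_eq : v = v i • simpleRoot i := by
    ext j
    obtain rfl | hij := eq_or_ne i j
    · simp
    · simpa [hij] using le_antisymm (hcon j hij.symm) (hv.2 j)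
  have hsq : v i * v i = 1 := by
    have h := titsForm_self_of_mem_roots hv.1
    rw [hv_eq, map_smul, map_smul, LinearMap.smul_apply, titsForm_simpleRoot_self] at h
    simpa using h
  have hone : v i = 1 := (mul_self_eq_one_iff.mp hsq).resolve_right
    fun h => absurd (hv.2 i) (by simp [h])
  exact hne (by rw [hv_eq, hone, one_smul])

theorem geomRep_simple_mem_posRoots {i : B} (hv : v ∈ posRoots cs) (hne : v ≠ simpleRoot i) :
    geomRep cs (cs.simple i) v ∈ posRoots cs := by
  obtain ⟨j, hji, hj⟩ := exists_ne_pos_of_mem_posRoots hv hne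
  refine (mem_posRoots_or_neg_mem_posRoots (geomRep_mem_roots _ hv.1)).resolve_right fun hneg => ?_
  exact hj.not_ge (by simpa [geomRep_simple_apply, hji.symm] using hneg.2 j)

end Roots

section Faithful

variable {B W : Type*} [Group W] {M : CoxeterMatrix B} (cs : CoxeterSystem M W)

theorem geomRep_injective : Function.Injective (geomRep cs) := by
  refine (injective_iff_map_eq_one _).mpr fun w hw => ?_
  by_contra hne
  obtain ⟨i, hi⟩ := cs.exists_rightDescent_of_ne_one hne
  exact absurd (geomRep_simpleRoot_nonpos cs hi i) (by simp [hw])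

theorem finite_of_finite_posRoots [Finite B] (h : (posRoots cs).Finite) : Finite W := by
  have hroots : (roots cs).Finite := (h.union h.neg).subset fun v hv =>
    mem_posRoots_or_neg_mem_posRoots hv
  have := hroots.to_subtype
  refine Finite.of_injective (fun w i => (⟨_, w, i, rfl⟩ : roots cs)) fun w w' hww' => ?_
  refine geomRep_injective cs (Finsupp.lhom_ext' fun i => LinearMap.ext_ring ?_)
  exact congr_arg Subtype.val (congr_fun hww' i)

end Faithful

section TitsCone

variable {B W : Type*} [Group W] {M : CoxeterMatrix B} (cs : CoxeterSystem M W)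

/-- The positive roots on which the functional `ξ` is negative, that is, the walls separating `ξ`
from the dominant chamber. -/
def negRoots (ξ : Dual ℝ (B →₀ ℝ)) : Set (B →₀ ℝ) := {v ∈ posRoots cs | ξ v < 0}

/-- The Tits cone, encoded through its description as the set of functionals which are negative on
only finitely many positive roots. -/
def titsCone : PointedCone ℝ (Dual ℝ (B →₀ ℝ)) where
  carrier := {ξ | (negRoots cs ξ).Finite}
  zero_mem' := by simp [negRoots]
  add_mem' {ξ η} hξ hη := by
    refine (hξ.union hη).subset fun v hv => ?_
    by_contra! hcon
    simp only [negRoots, Set.mem_union, Set.mem_sep_iff, not_or, not_and, not_lt] at hcon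
    exact hv.2.not_ge (add_nonneg (hcon.1 hv.1) (hcon.2 hv.1))
  smul_mem' c ξ hξ := hξ.subset fun _ hv => ⟨hv.1, neg_of_mul_neg_right hv.2 c.2⟩

/-- The functionals in the closed fundamental chamber. -/
def IsDominant (ξ : Dual ℝ (B →₀ ℝ)) : Prop := ∀ i, 0 ≤ ξ (simpleRoot i)

lemma mem_titsCone_iff {ξ : Dual ℝ (B →₀ ℝ)} : ξ ∈ titsCone cs ↔ (negRoots cs ξ).Finite := .rfl

lemma dual_geomRep_simple_apply (i : B) (ξ : Dual ℝ (B →₀ ℝ)) (v : B →₀ ℝ) :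
    (geomRep cs).dual (cs.simple i) ξ v = ξ (geomRep cs (cs.simple i) v) := by
  simp [Representation.dual_apply, Dual.transpose_apply]

variable {cs} {ξ : Dual ℝ (B →₀ ℝ)}

lemma IsDominant.apply_nonneg (hξ : IsDominant ξ) {v : B →₀ ℝ} (hv : 0 ≤ v) : 0 ≤ ξ v := by
  have hsum : ξ v = v.sum fun i c => c * ξ (simpleRoot i) := by
    conv_lhs => rw [← v.sum_single, map_finsuppSum]
    exact Finsupp.sum_congr fun i _ => by rw [← smul_single_one, map_smul, smul_eq_mul]
  exact hsum ▸ Finset.sum_nonneg fun i _ => mul_nonneg (hv i) (hξ i)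

lemma IsDominant.mem_titsCone (hξ : IsDominant ξ) : ξ ∈ titsCone cs := by
  have hempty : negRoots cs ξ = ∅ :=
    Set.eq_empty_of_forall_notMem fun v hv => (hξ.apply_nonneg hv.1.2).not_gt hv.2
  rw [mem_titsCone_iff, hempty]
  exact Set.finite_empty

lemma negRoots_dual_simple_diff_subset (i : B) :
    negRoots cs ((geomRep cs).dual (cs.simple i) ξ) \ {simpleRoot i} ⊆
      geomRep cs (cs.simple i) '' (negRoots cs ξ \ {simpleRoot i}) := by
  rintro v ⟨⟨hv, hneg⟩, hne⟩
  rw [dual_geomRep_simple_apply] at hneg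
  refine ⟨_, ⟨⟨geomRep_simple_mem_posRoots hv hne, hneg⟩, fun heq => ?_⟩,
    geomRep_simple_cancel cs i v⟩
  have hv_eq : v = -simpleRoot i := by
    rw [← geomRep_simple_cancel cs i v, heq, geomRep_simple_simpleRoot_self]
  exact absurd (hv.2 i) (by simp [hv_eq])

lemma dual_mem_titsCone (w : W) (hξ : ξ ∈ titsCone cs) : (geomRep cs).dual w ξ ∈ titsCone cs := by
  induction w using cs.simple_induction generalizing ξ with
  | simple i =>
    have hfin := (hξ.sdiff (t := {simpleRoot i})).image (geomRep cs (cs.simple i))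
    exact (hfin.subset (negRoots_dual_simple_diff_subset i)).of_sdiff (Set.finite_singleton _)
  | one => rwa [map_one]
  | mul w w' hw hw' =>
    rw [map_mul]
    exact hw (hw' hξ)

lemma ncard_negRoots_dual_simple_lt {i : B} (hξ : ξ ∈ titsCone cs) (hi : ξ (simpleRoot i) < 0) :
    (negRoots cs ((geomRep cs).dual (cs.simple i) ξ)).ncard < (negRoots cs ξ).ncard := by
  have hmem : simpleRoot i ∈ negRoots cs ξ := ⟨simpleRoot_mem_posRoots cs i, hi⟩
  have hnotMem : simpleRoot i ∉ negRoots cs ((geomRep cs).dual (cs.simple i) ξ) := fun h => by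
    have := h.2
    rw [dual_geomRep_simple_apply, geomRep_simple_simpleRoot_self, map_neg] at this
    linarith
  have hfin : (negRoots cs ξ).Finite := hξ
  calc (negRoots cs ((geomRep cs).dual (cs.simple i) ξ)).ncard
      ≤ (geomRep cs (cs.simple i) '' (negRoots cs ξ \ {simpleRoot i})).ncard :=
        Set.ncard_le_ncard (Set.sdiff_singleton_eq_self hnotMem ▸
          negRoots_dual_simple_diff_subset i) (hfin.sdiff.image _)
    _ ≤ (negRoots cs ξ \ {simpleRoot i}).ncard := Set.ncard_image_le hfin.sdiff
    _ < (negRoots cs ξ).ncard := Set.ncard_sdiff_singleton_lt_of_mem hmem hfin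

theorem exists_isDominant_dual (hξ : ξ ∈ titsCone cs) :
    ∃ w : W, IsDominant ((geomRep cs).dual w ξ) := by
  induction hn : (negRoots cs ξ).ncard using Nat.strong_induction_on generalizing ξ with
  | _ n ih =>
  by_cases hdom : IsDominant ξ
  · exact ⟨1, by rwa [map_one]⟩
  obtain ⟨i, hi⟩ : ∃ i, ξ (simpleRoot i) < 0 := by simpa [IsDominant] using hdom
  obtain ⟨w, hw⟩ := ih _ (hn ▸ ncard_negRoots_dual_simple_lt hξ hi)
    (dual_mem_titsCone (cs.simple i) hξ) rfl
  exact ⟨w * cs.simple i, by rwa [map_mul]⟩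

end TitsCone

section Stabilizer

variable {k G V : Type*} [Semiring k] [Group G] [AddCommMonoid V] [Module k V]

/-- The stabilizer of a vector under a group representation. -/
def stabilizer (ρ : Representation k G V) (v : V) : Subgroup G where
  carrier := {g | ρ g v = v}
  one_mem' := by simp
  mul_mem' {g h} hg hh := by
    rw [Set.mem_ofPred_eq] at hg hh ⊢
    rw [map_mul, End.mul_apply, hh, hg]
  inv_mem' {g} hg := ρ.inv_apply_eq_iff.mpr (Eq.symm hg)

variable {ρ : Representation k G V} {v : V}

lemma mem_stabilizer_iff {g : G} : g ∈ stabilizer ρ v ↔ ρ g v = v := .rfl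

lemma mem_stabilizer_apply_iff {g x : G} :
    x ∈ stabilizer ρ (ρ g v) ↔ g⁻¹ * x * g ∈ stabilizer ρ v := by
  simp only [mem_stabilizer_iff, map_mul, End.mul_apply, ρ.inv_apply_eq_iff]

end Stabilizer

section Parabolic

variable {B W : Type*} [Group W] {M : CoxeterMatrix B} {cs : CoxeterSystem M W}
  {ξ : Dual ℝ (B →₀ ℝ)}

lemma simple_mem_stabilizer_iff {i : B} :
    cs.simple i ∈ stabilizer (geomRep cs).dual ξ ↔ ξ (simpleRoot i) = 0 := by
  rw [mem_stabilizer_iff]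
  constructor
  · intro h
    have := dual_geomRep_simple_apply cs i ξ (simpleRoot i)
    rw [h, geomRep_simple_simpleRoot_self, map_neg] at this
    linarith
  · intro h
    refine LinearMap.ext fun v => ?_
    rw [dual_geomRep_simple_apply, geomRep_simple_apply, map_sub, map_smul, h, smul_zero, sub_zero]

theorem IsDominant.stabilizer_eq_stdParabolic (hξ : IsDominant ξ) :
    stabilizer (geomRep cs).dual ξ = stdParabolic cs {i | ξ (simpleRoot i) = 0} := by
  refine le_antisymm (fun x hx => ?_) ?_
  · induction hn : cs.length x using Nat.strong_induction_on generalizing x with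
    | _ n ih =>
    by_cases hone : x = 1
    · exact hone ▸ one_mem _
    obtain ⟨i, hi⟩ := cs.exists_rightDescent_of_ne_one hone
    have hxi : ξ (geomRep cs x (simpleRoot i)) = ξ (simpleRoot i) := by
      simpa [Representation.dual_apply, Dual.transpose_apply] using
        LinearMap.congr_fun (mem_stabilizer_iff.mp (inv_mem hx)) (simpleRoot i)
    have hi_zero : ξ (simpleRoot i) = 0 := by
      have hneg := hξ.apply_nonneg (neg_nonneg.mpr (geomRep_simpleRoot_nonpos cs hi))
      rw [map_neg, hxi] at hneg
      linarith [hξ i]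
    have hprod := ih _ (hi.trans_eq hn) _ (mul_mem hx (simple_mem_stabilizer_iff.mpr hi_zero)) rfl
    rw [← cs.simple_mul_simple_cancel_right (w := x) i]
    exact mul_mem hprod (Subgroup.subset_closure ⟨i, hi_zero, rfl⟩)
  · rw [stdParabolic, Subgroup.closure_le]
    rintro _ ⟨i, hi, rfl⟩
    exact simple_mem_stabilizer_iff.mpr hi

theorem isParabolic_stabilizer (hξ : ξ ∈ titsCone cs) :
    IsParabolic cs (stabilizer (geomRep cs).dual ξ) := by
  obtain ⟨w, hw⟩ := exists_isDominant_dual hξ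
  refine ⟨{i | (geomRep cs).dual w ξ (simpleRoot i) = 0}, w⁻¹, fun x => ?_⟩
  rw [← hw.stabilizer_eq_stdParabolic, mem_stabilizer_apply_iff]
  simp [mul_assoc]

theorem exists_isDominant_stabilizer_eq (J : Set B) :
    ∃ ξ, IsDominant ξ ∧ stabilizer (geomRep cs).dual ξ = stdParabolic cs J := by
  let ξ : Dual ℝ (B →₀ ℝ) := linearCombination ℝ (Jᶜ.indicator 1)
  have hξ : IsDominant ξ := fun i => by
    have := Set.indicator_nonneg (s := Jᶜ) (f := (1 : B → ℝ)) (fun _ _ => zero_le_one) i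
    simpa [ξ] using this
  refine ⟨ξ, hξ, hξ.stabilizer_eq_stdParabolic.trans ?_⟩
  congr 1
  ext i
  simp [ξ]

theorem exists_mem_titsCone_eq_stabilizer {P : Subgroup W} (hP : IsParabolic cs P) :
    ∃ ξ ∈ titsCone cs, P = stabilizer (geomRep cs).dual ξ := by
  obtain ⟨J, w, hJ⟩ := hP
  obtain ⟨ξ, hξ, hstab⟩ := exists_isDominant_stabilizer_eq (cs := cs) J
  refine ⟨_, dual_mem_titsCone w hξ.mem_titsCone, Subgroup.ext fun x => ?_⟩
  rw [hJ, mem_stabilizer_apply_iff, hstab]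

lemma stabilizer_eq_top_iff : stabilizer (geomRep cs).dual ξ = ⊤ ↔ ξ = 0 := by
  constructor
  · intro h
    refine Finsupp.lhom_ext' fun i => LinearMap.ext_ring ?_
    exact simple_mem_stabilizer_iff.mp (h ▸ Subgroup.mem_top (cs.simple i))
  · rintro rfl
    exact (Subgroup.eq_top_iff' _).mpr fun x => map_zero _

end Parabolic

section Salience

variable {B W : Type*} [Group W] {M : CoxeterMatrix B} {cs : CoxeterSystem M W}

lemma finite_titsForm_ne_zero {f : Dual ℝ (B →₀ ℝ)} {i : B}
    (hf : {v ∈ posRoots cs | f v ≠ 0}.Finite) (hi : f (simpleRoot i) ≠ 0) :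
    {v ∈ posRoots cs | titsForm M (simpleRoot i) v ≠ 0}.Finite := by
  refine ((hf.union (hf.image (geomRep cs (cs.simple i)))).insert (simpleRoot i)).subset ?_
  rintro v ⟨hv, htits⟩
  by_contra! hcon
  obtain ⟨hne, hv_notMem, hsv_notMem⟩ : v ≠ simpleRoot i ∧ v ∉ {v ∈ posRoots cs | f v ≠ 0} ∧
      v ∉ geomRep cs (cs.simple i) '' {v ∈ posRoots cs | f v ≠ 0} := by
    simpa only [Set.mem_insert_iff, Set.mem_union, not_or] using hcon
  have hfv : f v = 0 := by_contra fun h => hv_notMem ⟨hv, h⟩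
  have hfsv : f (geomRep cs (cs.simple i) v) = 0 := by_contra fun h =>
    hsv_notMem ⟨_, ⟨geomRep_simple_mem_posRoots hv hne, h⟩, geomRep_simple_cancel cs i v⟩
  rw [geomRep_simple_apply, map_sub, map_smul, hfv, zero_sub, neg_eq_zero] at hfsv
  exact (smul_ne_zero (mul_ne_zero two_ne_zero htits) hi) hfsv

lemma titsForm_simpleRoot_ne_zero {i j : B} (hij : M i j ≠ 2) :
    titsForm M (simpleRoot i) (simpleRoot j) ≠ 0 := by
  obtain rfl | hne := eq_or_ne i j
  · simp [titsForm_simpleRoot_self]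
  · rw [titsForm_simpleRoot]
    exact (neg_neg_of_pos (cos_pi_div_pos (M.off_diagonal i j hne) hij)).ne

lemma forall_finite_titsForm_ne_zero (hirr : CoxIrreducible M) {f : Dual ℝ (B →₀ ℝ)}
    (hf : {v ∈ posRoots cs | f v ≠ 0}.Finite) (hf0 : f ≠ 0) (i : B) :
    {v ∈ posRoots cs | titsForm M (simpleRoot i) v ≠ 0}.Finite := by
  let I : Set B := {i | {v ∈ posRoots cs | titsForm M (simpleRoot i) v ≠ 0}.Finite}
  have hclosed : ∀ i ∈ I, ∀ j ∉ I, M i j = 2 := fun i hi j hj =>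
    by_contra fun h => hj (finite_titsForm_ne_zero hi (titsForm_simpleRoot_ne_zero h))
  obtain ⟨j, hj⟩ : ∃ j, f (simpleRoot j) ≠ 0 := by
    by_contra! h
    exact hf0 (Finsupp.lhom_ext' fun i => LinearMap.ext_ring (h i))
  have hI : I.Nonempty := ⟨j, finite_titsForm_ne_zero hf hj⟩
  exact Set.eq_univ_iff_forall.mp ((hirr I hclosed).resolve_left hI.ne_empty) i

lemma exists_titsForm_simpleRoot_ne_zero {v : B →₀ ℝ} (hv : v ∈ roots cs) :
    ∃ i, titsForm M (simpleRoot i) v ≠ 0 := by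
  by_contra! h
  have hzero : (titsForm M).flip v = 0 := Finsupp.lhom_ext' fun i => LinearMap.ext_ring (h i)
  have hself : titsForm M v v = 0 := LinearMap.congr_fun hzero v
  exact one_ne_zero ((titsForm_self_of_mem_roots hv).symm.trans hself)

/- If `ξ` and `-ξ` both lie in the cone, then `ξ` vanishes on almost all positive roots. Reflecting
in a simple root on which `ξ` does not vanish, and using irreducibility, so does every `⟪α i, ·⟫`,
which leaves only finitely many positive roots. -/
theorem salient_titsCone [Finite B] [Infinite W] (hirr : CoxIrreducible M) :
    (titsCone cs : ConvexCone ℝ (Dual ℝ (B →₀ ℝ))).Salient := by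
  intro ξ hξ hξ0 hneg
  have hfin : {v ∈ posRoots cs | ξ v ≠ 0}.Finite := by
    refine (Set.Finite.union hξ hneg).subset fun v hv => ?_
    exact hv.2.lt_or_gt.imp (⟨hv.1, ·⟩) (⟨hv.1, neg_neg_of_pos ·⟩)
  have hpos : (posRoots cs).Finite := by
    refine (Set.finite_iUnion (forall_finite_titsForm_ne_zero hirr hfin hξ0)).subset fun v hv => ?_
    obtain ⟨i, hi⟩ := exists_titsForm_simpleRoot_ne_zero hv.1
    exact Set.mem_iUnion.mpr ⟨i, hv, hi⟩
  have := finite_of_finite_posRoots cs hpos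
  exact not_finite W

end Salience

section FixedPoint

variable {R V : Type*} [Ring R] [PartialOrder R] [IsOrderedRing R] [AddCommGroup V] [Module R V]

theorem exists_ne_zero_apply_eq_self {C : PointedCone R V} (hC : (C : ConvexCone R V).Salient)
    {T : End R V} (hT : Set.MapsTo T C C) {v : V} (hv : v ∈ C) (hv0 : v ≠ 0) {m : ℕ} (hm : m ≠ 0)
    (hTv : (T ^ m) v = v) : ∃ u ∈ C, u ≠ 0 ∧ T u = u := by
  obtain ⟨m, rfl⟩ := Nat.exists_eq_succ_of_ne_zero hm
  have hmem (k : ℕ) : (T ^ k) v ∈ C := by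
    rw [End.pow_apply]
    exact hT.iterate k hv
  have hsum : ∑ k ∈ Finset.range (m + 1), (T ^ k) v =
      ∑ k ∈ Finset.range m, (T ^ (k + 1)) v + v := Finset.sum_range_succ' _ _
  refine ⟨∑ k ∈ Finset.range (m + 1), (T ^ k) v, sum_mem fun k _ => hmem k, fun h0 => ?_, ?_⟩
  · have hneg : -v ∈ C := by
      rw [← eq_neg_of_add_eq_zero_left (hsum ▸ h0)]
      exact sum_mem fun k _ => hmem (k + 1)
    exact hC v hv hv0 hneg
  · rw [map_sum]
    calc ∑ k ∈ Finset.range (m + 1), T ((T ^ k) v)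
        = ∑ k ∈ Finset.range (m + 1), (T ^ (k + 1)) v := by simp only [pow_succ', End.mul_apply]
      _ = ∑ k ∈ Finset.range (m + 1), (T ^ k) v := by rw [Finset.sum_range_succ, hsum, hTv]

end FixedPoint

end GeometricRepresentation

open GeometricRepresentation

/-- In an infinite irreducible Coxeter group of finite rank, every power of an essential
element is essential. -/
theorem stmt_14 {B W : Type*} [Group W] [Fintype B] [Infinite W]
    {M : CoxeterMatrix B} (cs : CoxeterSystem M W) (hirr : CoxIrreducible M)
    (x : W) (hx : Essential cs x) (m : ℕ) (hm : 0 < m) :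
    Essential cs (x ^ m) := by
  intro P hP hxP
  obtain ⟨ξ, hξ, rfl⟩ := exists_mem_titsCone_eq_stabilizer hP
  by_contra hne
  have hξ0 : ξ ≠ 0 := fun h => hne (stabilizer_eq_top_iff.mpr h)
  have hfix : ((geomRep cs).dual x ^ m) ξ = ξ := by rwa [← map_pow]
  obtain ⟨η, hη, hη0, hxη⟩ := exists_ne_zero_apply_eq_self (salient_titsCone hirr)
    (fun _ => dual_mem_titsCone x) hξ hξ0 hm.ne' hfix
  exact hη0 (stabilizer_eq_top_iff.mp (hx _ (isParabolic_stabilizer hη) hxη))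
end

section
/- Let S₁, S₂ be two Coxeter generating sets for a finitely generated Coxeter group W. If for every J₁ ⊆ S₁ there is some J₂ ⊆ S₂ such that W_{J₁} is conjugate in W to W_{J₂}, then conversely for every J₂ ⊆ S₂ there is some J₁ ⊆ S₁ such that W_{J₂} is conjugate in W to W_{J₁}. -/
/-- Two subgroups are conjugate in `W`. -/
def ConjugateSubgroups {W : Type*} [Group W] (P Q : Subgroup W) : Prop :=
  ∃ w : W, ∀ x : W, x ∈ P ↔ w⁻¹ * x * w ∈ Q

/-!
Let `W` act on its geometric representation and, dually, on weights. The fundamental weight `ω_s` is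
dominant with stabilizer the maximal parabolic `W_{S - s}`, so this subgroup is conjugate to
`W_{S - t}` for some `t ≠ s` exactly when some element of `W` carries `ω_s` to a negative multiple
of `ω_t`. Given `s`, there is at most one such `t`, and it exists if and only if `W_{S - s}` has
finite index and is its own normalizer. Hence the abstract group `W` and the subgroup determine how
many maximal standard parabolics are conjugate to it.

If every parabolic of `S₁` is conjugate to one of `S₂`, then the elements of `S₁` are reflections
for `S₂`. Each reflection fixes a hyperplane of weights, so `S₁` has at least as many elements as
`S₂`, and a maximal parabolic of `S₁` is conjugate to a maximal one of `S₂`. Comparing the two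
counts in each conjugacy class, every maximal parabolic of `S₂` is conjugate to one of `S₁`. A
proper parabolic of `S₂` lies in a maximal one, to which the hypothesis restricts because the
intersection of two parabolics is parabolic; induct on the rank.
-/

open scoped Pointwise

section Conjugacy

variable {G : Type*} [Group G] {P Q R : Subgroup G}

theorem conjugateSubgroups_iff_exists_smul :
    ConjugateSubgroups P Q ↔ ∃ g : G, P = MulAut.conj g • Q := by
  refine exists_congr fun g => ?_
  rw [SetLike.ext_iff]
  refine forall_congr' fun x => ?_
  simp [Subgroup.mem_pointwise_smul_iff_inv_smul_mem]

theorem mem_normalizer_iff_conj_smul_eq {g : G} :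
    g ∈ Subgroup.normalizer (P : Set G) ↔ MulAut.conj g • P = P :=
  Subgroup.mem_normalizer_iff_map_conj_eq

theorem map_conj_smul {H : Type*} [Group H] (f : G →* H) (g : G) :
    (MulAut.conj g • P).map f = MulAut.conj (f g) • P.map f := by
  simp only [Subgroup.pointwise_smul_def]
  ext x
  simp

namespace ConjugateSubgroups

theorem refl (P : Subgroup G) : ConjugateSubgroups P P :=
  conjugateSubgroups_iff_exists_smul.mpr ⟨1, by simp⟩

theorem symm (h : ConjugateSubgroups P Q) : ConjugateSubgroups Q P := by
  obtain ⟨g, rfl⟩ := conjugateSubgroups_iff_exists_smul.mp h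
  exact conjugateSubgroups_iff_exists_smul.mpr ⟨g⁻¹, by simp⟩

theorem trans (h : ConjugateSubgroups P Q) (h' : ConjugateSubgroups Q R) :
    ConjugateSubgroups P R := by
  obtain ⟨g, rfl⟩ := conjugateSubgroups_iff_exists_smul.mp h
  obtain ⟨k, rfl⟩ := conjugateSubgroups_iff_exists_smul.mp h'
  exact conjugateSubgroups_iff_exists_smul.mpr ⟨g * k, by rw [map_mul, mul_smul]⟩

/-- Conjugacy as an equivalence relation on the subgroups of `G`, used to count parabolic subgroups
class by class. -/
def setoid (G : Type*) [Group G] : Setoid (Subgroup G) where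
  r := ConjugateSubgroups
  iseqv := ⟨refl, symm, trans⟩

theorem map {H : Type*} [Group H] (f : G →* H) (h : ConjugateSubgroups P Q) :
    ConjugateSubgroups (P.map f) (Q.map f) := by
  obtain ⟨g, rfl⟩ := conjugateSubgroups_iff_exists_smul.mp h
  exact conjugateSubgroups_iff_exists_smul.mpr ⟨f g, map_conj_smul f g⟩

theorem finiteIndex [Q.FiniteIndex] (h : ConjugateSubgroups P Q) : P.FiniteIndex := by
  obtain ⟨g, rfl⟩ := conjugateSubgroups_iff_exists_smul.mp h
  exact ⟨(Q.index_map_equiv (MulAut.conj g)).trans_ne Subgroup.FiniteIndex.index_ne_zero⟩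

theorem normalizer_le (h : ConjugateSubgroups P Q)
    (hQ : Subgroup.normalizer (Q : Set G) ≤ Q) : Subgroup.normalizer (P : Set G) ≤ P := by
  obtain ⟨g, rfl⟩ := conjugateSubgroups_iff_exists_smul.mp h
  intro k hk
  have hk' : g⁻¹ * k * g ∈ Subgroup.normalizer (Q : Set G) := by
    rw [mem_normalizer_iff_conj_smul_eq] at hk ⊢
    rw [mul_assoc, map_mul, map_mul, mul_smul, mul_smul, hk, map_inv, inv_smul_smul]
  simpa [Subgroup.mem_pointwise_smul_iff_inv_smul_mem] using hQ hk'

end ConjugateSubgroups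

end Conjugacy

namespace CoxeterGeometry

section RankTwo

open Polynomial Polynomial.Chebyshev Module

section Reflections

variable {R V : Type*} [CommRing R] [AddCommGroup V] [Module R V]
  {x y : V} {f g : Dual R V} (hf : f x = 2) (hg : g y = 2) {c : R}

theorem reflection_mul_reflection_pow_apply_left (hfy : f y = -c) (hgx : g x = -c) (k : ℕ) :
    ((reflection hf * reflection hg) ^ k) x =
      (S R (2 * k)).eval c • x + (S R (2 * k - 1)).eval c • y := by
  induction k with
  | zero => simp
  | succ k ih =>
    have hodd : (S R (2 * k + 1)).eval c =
        c * (S R (2 * k)).eval c - (S R (2 * k - 1)).eval c := by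
      simp [S_add_one]
    have heven : (S R (2 * (k + 1 : ℕ))).eval c =
        c * (S R (2 * k + 1)).eval c - (S R (2 * k)).eval c := by
      rw [show (2 * (k + 1 : ℕ) : ℤ) = 2 * k + 2 by push_cast; ring, S_add_two]
      simp
    rw [pow_succ', LinearEquiv.mul_apply, ih, LinearEquiv.mul_apply,
      show (2 * (k + 1 : ℕ) - 1 : ℤ) = 2 * k + 1 by push_cast; ring, heven, hodd]
    simp only [map_add, map_smul, map_sub, reflection_apply, hf, hg, hfy, hgx]
    module

end Reflections

theorem sin_pi_div_pos {m : ℕ} (hm : 2 ≤ m) : 0 < Real.sin (Real.pi / m) := by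
  have hm' : (2 : ℝ) ≤ m := by exact_mod_cast hm
  refine Real.sin_pos_of_pos_of_lt_pi (by positivity) (div_lt_self Real.pi_pos (by linarith))

theorem chebyshevS_eval_two_cos {m : ℕ} (hm : 2 ≤ m) (n : ℤ) :
    (S ℝ n).eval (2 * Real.cos (Real.pi / m)) =
      Real.sin ((n + 1) * (Real.pi / m)) / Real.sin (Real.pi / m) :=
  eq_div_of_mul_eq (sin_pi_div_pos hm).ne' (S_two_mul_real_cos _ n)

theorem chebyshevS_eval_two_cos_nonneg {m n : ℕ} (hm : m ≠ 1) (hn : m ≠ 0 → n ≤ m) :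
    0 ≤ (S ℝ (n - 1)).eval (2 * Real.cos (Real.pi / m)) := by
  rcases eq_or_ne m 0 with rfl | hm₀
  · simp [S_eval_two]
  · have hn' : (n : ℝ) ≤ m := by exact_mod_cast hn hm₀
    rw [chebyshevS_eval_two_cos (by omega)]
    refine div_nonneg (Real.sin_nonneg_of_nonneg_of_le_pi ?_ ?_) (sin_pi_div_pos (by omega)).le
    · push_cast
      rw [sub_add_cancel]
      positivity
    · have hm_pos : (0 : ℝ) < m := by positivity
      push_cast
      rw [sub_add_cancel, mul_div_assoc', div_le_iff₀ hm_pos, mul_comm]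
      gcongr

variable {V : Type*} [AddCommGroup V] [Module ℝ V] {x y : V} {f g : Dual ℝ V}
  (hf : f x = 2) (hg : g y = 2) {m : ℕ}

theorem reflection_mul_reflection_pow_fixes_left (hm : 2 ≤ m)
    (hfy : f y = -(2 * Real.cos (Real.pi / m))) (hgx : g x = -(2 * Real.cos (Real.pi / m))) :
    ((reflection hf * reflection hg) ^ m) x = x := by
  have hm₀ : (m : ℝ) ≠ 0 := by positivity
  have hs := (sin_pi_div_pos hm).ne'
  have hangle : (2 * m + 1) * (Real.pi / m) = Real.pi / m + 2 * Real.pi := by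
    field_simp
    ring
  have hangle' : 2 * (m : ℝ) * (Real.pi / m) = 2 * Real.pi := by field_simp
  rw [reflection_mul_reflection_pow_apply_left hf hg hfy hgx,
    chebyshevS_eval_two_cos hm, chebyshevS_eval_two_cos hm]
  push_cast
  rw [sub_add_cancel, hangle, hangle', Real.sin_add_two_pi, Real.sin_two_pi, div_self hs]
  simp

theorem reflection_mul_reflection_pow_eq_one (hm : 2 ≤ m)
    (hfy : f y = -(2 * Real.cos (Real.pi / m))) (hgx : g x = -(2 * Real.cos (Real.pi / m))) :
    (reflection hf * reflection hg) ^ m = 1 := by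
  set c : ℝ := 2 * Real.cos (Real.pi / m)
  set T : V ≃ₗ[ℝ] V := (reflection hf * reflection hg) ^ m
  have hTx : T x = x := reflection_mul_reflection_pow_fixes_left hf hg hm hfy hgx
  have hTy : T y = y := by
    have hT_inv : T⁻¹ = (reflection hg * reflection hf) ^ m := by
      rw [← inv_pow, mul_inv_rev]
      rfl
    have hy : T⁻¹ y = y := hT_inv ▸ reflection_mul_reflection_pow_fixes_left hg hf hm hgx hfy
    exact T.eq_symm_apply.mp hy.symm
  have hT_ker : ∀ q, f q = 0 → g q = 0 → T q = q := by
    intro q hfq hgq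
    have hfix : (reflection hf * reflection hg) q = q := by simp [reflection_apply, hfq, hgq]
    exact (MulAction.stabilizer (V ≃ₗ[ℝ] V) q).pow_mem hfix m
  have hdisc : 4 - c ^ 2 ≠ 0 := by
    have := sin_pi_div_pos hm
    have hsq : 4 - c ^ 2 = 4 * Real.sin (Real.pi / m) ^ 2 := by rw [Real.sin_sq]; ring
    rw [hsq]
    positivity
  ext v
  -- As `4 - c ^ 2 ≠ 0`, every vector is uniquely `a • x + b • y + q` with `f q = g q = 0`.
  set a := (2 * f v + c * g v) / (4 - c ^ 2)
  set b := (c * f v + 2 * g v) / (4 - c ^ 2)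
  have hq : T (v - a • x - b • y) = v - a • x - b • y := by
    apply hT_ker <;> simp only [map_sub, map_smul, smul_eq_mul, hf, hg, hfy, hgx, a, b] <;>
      field_simp <;> ring
  simpa [hTx, hTy] using hq

end RankTwo

section GeometricRepresentation

open CoxeterSystem Module

variable {B : Type*}

/-- The simple root indexed by `i`, a basis vector of the geometric representation. -/
noncomputable abbrev simpleRoot (i : B) : B →₀ ℝ := Finsupp.single i 1

/-- The simple coroot `2 ⟨α_i, ·⟩`, where `⟨α_i, α_j⟩ = -cos (π / M i j)`. When `M i j = 0`
encodes `∞`, division by zero makes this `⟨α_i, α_j⟩ = -1`, as it should be. -/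
noncomputable def simpleCoroot (M : CoxeterMatrix B) (i : B) : Dual ℝ (B →₀ ℝ) :=
  Finsupp.linearCombination ℝ fun j => -(2 * Real.cos (Real.pi / M i j))

theorem simpleCoroot_simpleRoot (M : CoxeterMatrix B) (i j : B) :
    simpleCoroot M i (simpleRoot j) = -(2 * Real.cos (Real.pi / M i j)) := by
  simp [simpleCoroot]

theorem simpleCoroot_simpleRoot_self (M : CoxeterMatrix B) (i : B) :
    simpleCoroot M i (simpleRoot i) = 2 := by
  simp [simpleCoroot_simpleRoot]

/-- The linear reflection of the geometric representation attached to the simple root `i`. -/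
noncomputable def simpleReflection (M : CoxeterMatrix B) (i : B) : (B →₀ ℝ) ≃ₗ[ℝ] (B →₀ ℝ) :=
  reflection (simpleCoroot_simpleRoot_self M i)

theorem isLiftable_simpleReflection (M : CoxeterMatrix B) : M.IsLiftable (simpleReflection M) := by
  intro i j
  rcases eq_or_ne i j with rfl | hij
  · ext1 v
    simpa [simpleReflection] using involutive_reflection (simpleCoroot_simpleRoot_self M i) v
  rcases eq_or_ne (M i j) 0 with hM | hM
  · rw [hM, pow_zero]
  · have := M.off_diagonal i j hij
    exact reflection_mul_reflection_pow_eq_one _ _ (by omega) (simpleCoroot_simpleRoot M i j)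
      (by rw [simpleCoroot_simpleRoot, M.symmetric])

variable {M : CoxeterMatrix B} {W : Type*} [Group W] (cs : CoxeterSystem M W)

/-- The geometric representation of a Coxeter group, on the space with basis the simple roots. -/
noncomputable def geomRep : Representation ℝ W (B →₀ ℝ) :=
  LinearEquiv.automorphismGroup.toLinearMapMonoidHom.comp
    (cs.lift ⟨simpleReflection M, isLiftable_simpleReflection M⟩)

theorem geomRep_simple (i : B) (v : B →₀ ℝ) :
    geomRep cs (cs.simple i) v = v - simpleCoroot M i v • simpleRoot i := by
  simp only [geomRep, MonoidHom.comp_apply, lift_apply_simple]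
  exact reflection_apply v (simpleCoroot_simpleRoot_self M i)

theorem geomRep_simple_simpleRoot (i : B) :
    geomRep cs (cs.simple i) (simpleRoot i) = -simpleRoot i := by
  rw [geomRep_simple, simpleCoroot_simpleRoot_self]
  module

open Polynomial Polynomial.Chebyshev in
theorem geomRep_alternatingWord_simpleRoot (s t : B) (k : ℕ) :
    geomRep cs (cs.wordProd (alternatingWord s t k)) (simpleRoot s) =
      let c := 2 * Real.cos (Real.pi / M s t)
      if Even k then (S ℝ k).eval c • simpleRoot s + (S ℝ (k - 1)).eval c • simpleRoot t
      else (S ℝ (k - 1)).eval c • simpleRoot s + (S ℝ k).eval c • simpleRoot t := by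
  induction k with
  | zero => simp [alternatingWord]
  | succ k ih =>
    rw [alternatingWord_succ', wordProd_cons, map_mul, Module.End.mul_apply, ih]
    rw [Nat.cast_succ, add_sub_cancel_right, S_add_one]
    by_cases hk : Even k <;>
      simp only [hk, Nat.even_add_one, not_true, not_false_iff, if_true, if_false,
        geomRep_simple, map_add, map_smul, simpleCoroot_simpleRoot_self, simpleCoroot_simpleRoot,
        M.symmetric t s, eval_sub, eval_mul, eval_X] <;>
      module

theorem geomRep_alternatingWord_simpleRoot_mem_cone {s t : B} (hst : s ≠ t) {k : ℕ}
    (hk : M s t ≠ 0 → k < M s t) : ∃ a b : ℝ, 0 ≤ a ∧ 0 ≤ b ∧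
      geomRep cs (cs.wordProd (alternatingWord s t k)) (simpleRoot s) =
        a • simpleRoot s + b • simpleRoot t := by
  have hM := M.off_diagonal s t hst
  have hSk := chebyshevS_eval_two_cos_nonneg (n := k + 1) hM hk
  have hSk' := chebyshevS_eval_two_cos_nonneg hM fun h => (hk h).le
  push_cast at hSk
  rw [add_sub_cancel_right] at hSk
  rw [geomRep_alternatingWord_simpleRoot]
  split_ifs
  exacts [⟨_, _, hSk, hSk', rfl⟩, ⟨_, _, hSk', hSk, rfl⟩]

theorem exists_eq_mul_alternatingWord {w : W} {s : B} (t : B) (hw : ¬cs.IsRightDescent w s) :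
    ∃ v k, w = v * cs.wordProd (alternatingWord s t k) ∧ cs.length w = cs.length v + k ∧
      ¬cs.IsRightDescent v s ∧ ¬cs.IsRightDescent v t := by
  induction hn : cs.length w generalizing w s t with
  | zero =>
    have hw₁ : w = 1 := cs.length_eq_zero_iff.mp hn
    exact ⟨w, 0, by simp [alternatingWord], by omega, hw,
      hw₁ ▸ cs.not_isRightDescent_one t⟩
  | succ n ih =>
    by_cases ht : cs.IsRightDescent w t
    · obtain ⟨v, k, hv, hlen, hvt, hvs⟩ := ih s
        (cs.isRightDescent_iff_not_isRightDescent_mul.mp ht)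
        (by have := cs.isRightDescent_iff.mp ht; omega)
      refine ⟨v, k + 1, ?_, by omega, hvs, hvt⟩
      rw [alternatingWord_succ, wordProd_concat, ← mul_assoc, ← hv,
        simple_mul_simple_cancel_right]
    · exact ⟨w, 0, by simp [alternatingWord], by omega, hw, ht⟩

theorem lt_of_length_mul_alternatingWord {w v : W} {s t : B} {k : ℕ}
    (hw : ¬cs.IsRightDescent w s) (hwv : w = v * cs.wordProd (alternatingWord s t k))
    (hlen : cs.length w = cs.length v + k) (hM : M s t ≠ 0) : k < M s t := by
  by_contra! hk
  apply cs.not_isReduced_alternatingWord t s (m := k + 1) (by rwa [M.symmetric])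
    (by rw [M.symmetric]; omega)
  apply le_antisymm (cs.length_wordProd_le _)
  have hws : w * cs.simple s = v * cs.wordProd (alternatingWord t s (k + 1)) := by
    rw [alternatingWord_succ, wordProd_concat, hwv, mul_assoc]
  have hle := cs.length_mul_le v (cs.wordProd (alternatingWord t s (k + 1)))
  rw [← hws, cs.not_isRightDescent_iff.mp hw] at hle
  rw [length_alternatingWord]
  omega

theorem geomRep_simpleRoot_nonneg {w : W} {s : B} (h : ¬cs.IsRightDescent w s) :
    0 ≤ geomRep cs w (simpleRoot s) := by
  induction hn : cs.length w using Nat.strong_induction_on generalizing w s with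
  | _ n ih =>
    rcases eq_or_ne w 1 with rfl | hw
    · simp
    obtain ⟨t, ht⟩ := cs.exists_rightDescent_of_ne_one hw
    have hst : s ≠ t := by rintro rfl; exact h ht
    obtain ⟨v, k, hwv, hlen, hvs, hvt⟩ := exists_eq_mul_alternatingWord cs t h
    have hk : k ≠ 0 := by
      rintro rfl
      exact hvt (by simpa [hwv, alternatingWord] using ht)
    obtain ⟨a, b, ha, hb, hab⟩ := geomRep_alternatingWord_simpleRoot_mem_cone cs hst
      (lt_of_length_mul_alternatingWord cs h hwv hlen)
    rw [hwv, map_mul, Module.End.mul_apply, hab, map_add, map_smul, map_smul]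
    exact add_nonneg (smul_nonneg ha (ih _ (by omega) hvs rfl))
      (smul_nonneg hb (ih _ (by omega) hvt rfl))

theorem geomRep_simpleRoot_nonpos {w : W} {s : B} (h : cs.IsRightDescent w s) :
    geomRep cs w (simpleRoot s) ≤ 0 := by
  have hpos := geomRep_simpleRoot_nonneg cs (cs.isRightDescent_iff_not_isRightDescent_mul.mp h)
  rwa [map_mul, Module.End.mul_apply, geomRep_simple_simpleRoot, map_neg, neg_nonneg] at hpos

end GeometricRepresentation

section Weights

open CoxeterSystem Module

variable {B : Type*}

/-- Weights are linear functionals on the geometric representation. -/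
abbrev Weight (B : Type*) := Dual ℝ (B →₀ ℝ)

theorem Weight.ext_simpleRoot {l m : Weight B} (h : ∀ s, l (simpleRoot s) = m (simpleRoot s)) :
    l = m :=
  Finsupp.lhom_ext' fun s => LinearMap.ext_ring (h s)

/-- A weight is dominant if it lies in the closed fundamental chamber. -/
def IsDominant (l : Weight B) : Prop := ∀ s, 0 ≤ l (simpleRoot s)

theorem IsDominant.apply_nonneg {l : Weight B} (hl : IsDominant l) {v : B →₀ ℝ} (hv : 0 ≤ v) :
    0 ≤ l v := by
  rw [← Finsupp.sum_single v, Finsupp.sum, map_sum]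
  refine Finset.sum_nonneg fun s _ => ?_
  rw [← mul_one (v s), ← smul_eq_mul, ← Finsupp.smul_single, map_smul]
  exact mul_nonneg (hv s) (hl s)

theorem IsDominant.apply_nonpos {l : Weight B} (hl : IsDominant l) {v : B →₀ ℝ} (hv : v ≤ 0) :
    l v ≤ 0 := by
  simpa using hl.apply_nonneg (neg_nonneg.mpr hv)

theorem IsDominant.smul {l : Weight B} (hl : IsDominant l) {c : ℝ} (hc : 0 ≤ c) :
    IsDominant (c • l) :=
  fun s => mul_nonneg hc (hl s)

/-- The fundamental weight dual to the simple root `s`. -/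
noncomputable def fundamentalWeight (s : B) : Weight B := Finsupp.lapply s

theorem fundamentalWeight_self (s : B) : fundamentalWeight s (simpleRoot s) = 1 := by
  simp [fundamentalWeight]

theorem fundamentalWeight_of_ne {s t : B} (h : s ≠ t) :
    fundamentalWeight s (simpleRoot t) = 0 := by
  simp [fundamentalWeight, h]

theorem fundamentalWeight_ne_zero (s : B) : fundamentalWeight s ≠ 0 := fun h => by
  simpa [h] using fundamentalWeight_self s

theorem isDominant_fundamentalWeight (s : B) : IsDominant (fundamentalWeight s) := fun t => by
  rcases eq_or_ne s t with rfl | h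
  · simp [fundamentalWeight_self]
  · rw [fundamentalWeight_of_ne h]

theorem setOf_fundamentalWeight_eq_zero (s : B) :
    {t | fundamentalWeight s (simpleRoot t) = 0} = {s}ᶜ := by
  ext t
  rcases eq_or_ne s t with rfl | h
  · simp [fundamentalWeight_self]
  · simp [fundamentalWeight_of_ne h, h.symm]

theorem eq_of_fundamentalWeight_eq_smul {s t : B} {c : ℝ}
    (h : fundamentalWeight s = c • fundamentalWeight t) : s = t := by
  by_contra hst
  have hs : (1 : ℝ) = c * 0 := by
    simpa [fundamentalWeight_self, fundamentalWeight_of_ne (Ne.symm hst)] using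
      DFunLike.congr_fun h (simpleRoot s)
  simp at hs

variable {M : CoxeterMatrix B} {W : Type*} [Group W] (cs : CoxeterSystem M W)

/-- The action of a Coxeter group on weights, dual to the geometric representation. -/
noncomputable def weightRep : Representation ℝ W (Weight B) := (geomRep cs).dual

theorem weightRep_apply (w : W) (l : Weight B) (v : B →₀ ℝ) :
    weightRep cs w l v = l (geomRep cs w⁻¹ v) := rfl

theorem weightRep_mul (u w : W) (l : Weight B) :
    weightRep cs (u * w) l = weightRep cs u (weightRep cs w l) := by
  rw [map_mul, Module.End.mul_apply]

theorem weightRep_simple_apply (i : B) (l : Weight B) (v : B →₀ ℝ) :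
    weightRep cs (cs.simple i) l v = l v - simpleCoroot M i v * l (simpleRoot i) := by
  rw [weightRep_apply, cs.inv_simple, geomRep_simple, map_sub, map_smul, smul_eq_mul]

theorem weightRep_simple_apply_simpleRoot (i : B) (l : Weight B) :
    weightRep cs (cs.simple i) l (simpleRoot i) = -l (simpleRoot i) := by
  rw [weightRep_simple_apply, simpleCoroot_simpleRoot_self]
  ring

theorem weightRep_simple_eq_self_iff {i : B} {l : Weight B} :
    weightRep cs (cs.simple i) l = l ↔ l (simpleRoot i) = 0 := by
  refine ⟨fun h => ?_, fun h => LinearMap.ext fun v => ?_⟩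
  · have := weightRep_simple_apply_simpleRoot cs i l
    rw [h] at this
    linarith
  · rw [weightRep_simple_apply, h, mul_zero, sub_zero]

/-- The subgroup of the Coxeter group fixing a given weight. -/
noncomputable def weightStabilizer (l : Weight B) : Subgroup W :=
  letI := MulAction.compHom (Weight B) (weightRep cs)
  MulAction.stabilizer W l

theorem mem_weightStabilizer {l : Weight B} {w : W} :
    w ∈ weightStabilizer cs l ↔ weightRep cs w l = l := Iff.rfl

theorem weightStabilizer_weightRep (w : W) (l : Weight B) :
    weightStabilizer cs (weightRep cs w l) = MulAut.conj w • weightStabilizer cs l :=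
  letI := MulAction.compHom (Weight B) (weightRep cs)
  MulAction.stabilizer_smul_eq_stabilizer_map_conj w l

theorem weightStabilizer_neg (l : Weight B) :
    weightStabilizer cs (-l) = weightStabilizer cs l := by
  ext w
  rw [mem_weightStabilizer, mem_weightStabilizer, map_neg, neg_inj]

theorem weightStabilizer_smul {c : ℝ} (hc : c ≠ 0) (l : Weight B) :
    weightStabilizer cs (c • l) = weightStabilizer cs l := by
  ext w
  rw [mem_weightStabilizer, mem_weightStabilizer, map_smul, smul_right_inj hc]

theorem simple_mem_stdParabolic {J : Set B} {i : B} (h : i ∈ J) :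
    cs.simple i ∈ stdParabolic cs J :=
  Subgroup.subset_closure ⟨i, h, rfl⟩

theorem stdParabolic_mono {J K : Set B} (h : J ⊆ K) : stdParabolic cs J ≤ stdParabolic cs K :=
  Subgroup.closure_mono (Set.image_mono h)

theorem stdParabolic_univ : stdParabolic cs Set.univ = ⊤ := by
  rw [stdParabolic, Set.image_univ, cs.subgroup_closure_range_simple]

theorem stdParabolic_le_weightStabilizer_iff {J : Set B} {l : Weight B} :
    stdParabolic cs J ≤ weightStabilizer cs l ↔ ∀ j ∈ J, l (simpleRoot j) = 0 := by
  simp only [stdParabolic, Subgroup.closure_le, Set.subset_def, Set.forall_mem_image,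
    SetLike.mem_coe, mem_weightStabilizer, weightRep_simple_eq_self_iff]

theorem eq_zero_of_weightStabilizer_eq_top {l : Weight B} (h : weightStabilizer cs l = ⊤) :
    l = 0 := by
  have hl := (stdParabolic_le_weightStabilizer_iff cs (J := Set.univ) (l := l)).mp (h ▸ le_top)
  exact Weight.ext_simpleRoot fun s => by simpa using hl s

/-- Each letter of a reduced word for `w` fixes `l`. -/
theorem IsDominant.mem_stdParabolic_of_weightRep {l : Weight B} (hl : IsDominant l) {w : W}
    (hw : IsDominant (weightRep cs w l)) : w ∈ stdParabolic cs {s | l (simpleRoot s) = 0} := by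
  induction hn : cs.length w using Nat.strong_induction_on generalizing w with
  | _ n ih =>
    rcases eq_or_ne w 1 with rfl | hw₁
    · exact one_mem _
    obtain ⟨s, hs⟩ := cs.exists_rightDescent_of_ne_one hw₁
    have hls : l (simpleRoot s) = 0 := by
      refine le_antisymm ?_ (hl s)
      simpa [weightRep_apply] using hw.apply_nonpos (geomRep_simpleRoot_nonpos cs hs)
    have hws : weightRep cs (w * cs.simple s) l = weightRep cs w l := by
      rw [weightRep_mul, (weightRep_simple_eq_self_iff cs).mpr hls]
    have hmem := ih _ (hn ▸ hs) (hws.symm ▸ hw) rfl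
    simpa using mul_mem hmem
      (simple_mem_stdParabolic cs (J := {s | l (simpleRoot s) = 0}) hls)

theorem IsDominant.weightStabilizer_eq {l : Weight B} (hl : IsDominant l) :
    weightStabilizer cs l = stdParabolic cs {s | l (simpleRoot s) = 0} := by
  refine le_antisymm (fun w hw => hl.mem_stdParabolic_of_weightRep cs ?_)
    ((stdParabolic_le_weightStabilizer_iff cs).mpr fun _ => id)
  rwa [(mem_weightStabilizer cs).mp hw]

theorem IsDominant.weightRep_eq_self {l : Weight B} (hl : IsDominant l) {w : W}
    (hw : IsDominant (weightRep cs w l)) : weightRep cs w l = l := by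
  rw [← mem_weightStabilizer, hl.weightStabilizer_eq]
  exact hl.mem_stdParabolic_of_weightRep cs hw

theorem weightStabilizer_fundamentalWeight (s : B) :
    weightStabilizer cs (fundamentalWeight s) = stdParabolic cs {s}ᶜ := by
  rw [(isDominant_fundamentalWeight s).weightStabilizer_eq, setOf_fundamentalWeight_eq_zero]

theorem eq_smul_fundamentalWeight {a : B} {l : Weight B}
    (h : stdParabolic cs {a}ᶜ ≤ weightStabilizer cs l) :
    l = l (simpleRoot a) • fundamentalWeight a := by
  refine Weight.ext_simpleRoot fun s => ?_
  rcases eq_or_ne a s with rfl | hs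
  · simp [fundamentalWeight_self]
  · simp [fundamentalWeight_of_ne hs,
      (stdParabolic_le_weightStabilizer_iff cs).mp h s (Ne.symm hs)]

/-- A dominant weight whose stabilizer is the standard parabolic subgroup on `J`. -/
noncomputable def parabolicWeight (J : Set B) : Weight B :=
  Finsupp.linearCombination ℝ (Jᶜ.indicator 1)

theorem parabolicWeight_simpleRoot (J : Set B) (s : B) :
    parabolicWeight J (simpleRoot s) = Jᶜ.indicator 1 s := by
  simp [parabolicWeight]

theorem isDominant_parabolicWeight (J : Set B) : IsDominant (parabolicWeight J) := fun s => by
  rw [parabolicWeight_simpleRoot]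
  exact Set.indicator_nonneg (fun _ _ => zero_le_one) s

theorem weightStabilizer_parabolicWeight (J : Set B) :
    weightStabilizer cs (parabolicWeight J) = stdParabolic cs J := by
  rw [(isDominant_parabolicWeight J).weightStabilizer_eq]
  congr 1
  ext s
  simp [parabolicWeight_simpleRoot]

theorem simple_mem_stdParabolic_iff {J : Set B} {i : B} :
    cs.simple i ∈ stdParabolic cs J ↔ i ∈ J := by
  rw [← weightStabilizer_parabolicWeight, mem_weightStabilizer, weightRep_simple_eq_self_iff,
    parabolicWeight_simpleRoot]
  simp

theorem exists_shortest_weightRep_eq (l : Weight B) (w : W) :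
    ∃ d, weightRep cs d l = weightRep cs w l ∧
      ∀ e, weightRep cs e l = weightRep cs d l → cs.length d ≤ cs.length e := by
  obtain ⟨d, hd, hmin⟩ := exists_minimalFor_of_wellFoundedLT
    (fun e => weightRep cs e l = weightRep cs w l) cs.length ⟨w, rfl⟩
  refine ⟨d, hd, fun e he => ?_⟩
  rcases le_total (cs.length d) (cs.length e) with h | h
  exacts [h, hmin (he.trans hd) h]

end Weights

section MaximalParabolics

open CoxeterSystem Module

variable {B : Type*} {M : CoxeterMatrix B} {W : Type*} [Group W] (cs : CoxeterSystem M W)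

theorem IsDominant.weightRep_simpleRoot_nonneg {l : Weight B} (hl : IsDominant l) {w : W} {s : B}
    (h : ¬cs.IsLeftDescent w s) : 0 ≤ weightRep cs w l (simpleRoot s) :=
  hl.apply_nonneg (geomRep_simpleRoot_nonneg cs (by rwa [cs.isRightDescent_inv_iff]))

theorem IsDominant.isLeftDescent_of_weightRep_neg {l : Weight B} (hl : IsDominant l) {w : W} {s : B}
    (h : weightRep cs w l (simpleRoot s) < 0) : cs.IsLeftDescent w s := by
  by_contra hs
  exact (hl.weightRep_simpleRoot_nonneg cs hs).not_gt h

theorem exists_weightRep_fundamentalWeight_eq_smul {a b : B} {g : W}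
    (h : MulAut.conj g • stdParabolic cs {a}ᶜ ≤ stdParabolic cs {b}ᶜ) :
    ∃ c : ℝ, c ≠ 0 ∧ weightRep cs g (fundamentalWeight a) = c • fundamentalWeight b := by
  have hle : stdParabolic cs {a}ᶜ ≤
      weightStabilizer cs (weightRep cs g⁻¹ (fundamentalWeight b)) := by
    rwa [weightStabilizer_weightRep, weightStabilizer_fundamentalWeight, map_inv,
      ← Subgroup.pointwise_smul_subset_iff]
  have heq := eq_smul_fundamentalWeight cs hle
  set c := weightRep cs g⁻¹ (fundamentalWeight b) (simpleRoot a)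
  replace heq : fundamentalWeight b = c • weightRep cs g (fundamentalWeight a) := by
    rw [← map_smul, ← heq, weightRep, Representation.self_inv_apply]
  have hc : c ≠ 0 := fun hc => fundamentalWeight_ne_zero b (by rw [heq, hc, zero_smul])
  exact ⟨c⁻¹, inv_ne_zero hc, (eq_inv_smul_iff₀ hc).mpr heq.symm⟩

section Nonneg

variable {cs} {a b : B} {w : W} {c : ℝ}

theorem weightRep_fundamentalWeight_eq_self (hc : 0 ≤ c)
    (h : weightRep cs w (fundamentalWeight a) = c • fundamentalWeight b) :
    weightRep cs w (fundamentalWeight a) = fundamentalWeight a :=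
  (isDominant_fundamentalWeight a).weightRep_eq_self cs
    (h ▸ (isDominant_fundamentalWeight b).smul hc)

theorem eq_of_weightRep_fundamentalWeight_eq_smul (hc : 0 ≤ c)
    (h : weightRep cs w (fundamentalWeight a) = c • fundamentalWeight b) : a = b :=
  eq_of_fundamentalWeight_eq_smul ((weightRep_fundamentalWeight_eq_self hc h).symm.trans h)

end Nonneg

theorem exists_weightRep_fundamentalWeight_eq_neg_smul {a b : B} (hab : a ≠ b)
    (h : ConjugateSubgroups (stdParabolic cs {b}ᶜ) (stdParabolic cs {a}ᶜ)) :
    ∃ (g : W) (c : ℝ), c < 0 ∧ weightRep cs g (fundamentalWeight a) = c • fundamentalWeight b := by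
  obtain ⟨g, hg⟩ := conjugateSubgroups_iff_exists_smul.mp h
  obtain ⟨c, -, hgc⟩ := exists_weightRep_fundamentalWeight_eq_smul cs hg.ge
  exact ⟨g, c, not_le.mp fun hc => hab (eq_of_weightRep_fundamentalWeight_eq_smul hc hgc), hgc⟩

theorem eq_of_conjugateSubgroups_compl_singleton {a b c : B} (hab : a ≠ b) (hac : a ≠ c)
    (hb : ConjugateSubgroups (stdParabolic cs {b}ᶜ) (stdParabolic cs {a}ᶜ))
    (hc : ConjugateSubgroups (stdParabolic cs {c}ᶜ) (stdParabolic cs {a}ᶜ)) : b = c := by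
  obtain ⟨g, x, hx, hgx⟩ := exists_weightRep_fundamentalWeight_eq_neg_smul cs hab hb
  obtain ⟨k, y, hy, hky⟩ := exists_weightRep_fundamentalWeight_eq_neg_smul cs hac hc
  have hbc : weightRep cs (k * g⁻¹) (fundamentalWeight b) = (x⁻¹ * y) • fundamentalWeight c := by
    rw [mul_smul, ← hky, eq_inv_smul_iff₀ hx.ne, ← map_smul, ← hgx, ← weightRep_mul,
      inv_mul_cancel_right]
  exact eq_of_weightRep_fundamentalWeight_eq_smul
    (mul_nonneg_of_nonpos_of_nonpos (inv_nonpos.mpr hx.le) hy.le) hbc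

theorem normalizer_stdParabolic_compl_singleton_le {a b : B} (hab : a ≠ b)
    (h : ConjugateSubgroups (stdParabolic cs {b}ᶜ) (stdParabolic cs {a}ᶜ)) :
    Subgroup.normalizer (stdParabolic cs {a}ᶜ : Set W) ≤ stdParabolic cs {a}ᶜ := by
  obtain ⟨g, x, hx, hgx⟩ := exists_weightRep_fundamentalWeight_eq_neg_smul cs hab h
  intro k hk
  obtain ⟨y, -, hky⟩ := exists_weightRep_fundamentalWeight_eq_smul cs
    (mem_normalizer_iff_conj_smul_eq.mp hk).le
  rcases le_total 0 y with hy | hy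
  · rw [← weightStabilizer_fundamentalWeight, mem_weightStabilizer]
    exact weightRep_fundamentalWeight_eq_self hy hky
  · have hgk : weightRep cs (g * k) (fundamentalWeight a) = (y * x) • fundamentalWeight b := by
      rw [weightRep_mul, hky, map_smul, hgx, smul_smul]
    exact absurd (eq_of_weightRep_fundamentalWeight_eq_smul
      (mul_nonneg_of_nonpos_of_nonpos hy hx.le) hgk) hab

/-- An element `g` carrying a dominant weight `l` to an antidominant one makes every root that is
positive on `l` negative, so the shortest `d` with a given value `d l` is a suffix of `g`. -/
theorem length_mul_inv_add_length_of_shortest {l : Weight B} (hl : IsDominant l) {g : W}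
    (hg : IsDominant (-weightRep cs g l)) {d : W}
    (hd : ∀ e, weightRep cs e l = weightRep cs d l → cs.length d ≤ cs.length e) :
    cs.length (g * d⁻¹) + cs.length d = cs.length g := by
  induction hn : cs.length d generalizing d with
  | zero => simp [cs.length_eq_zero_iff.mp hn]
  | succ n ih =>
    have hd₁ : d ≠ 1 := by rintro rfl; simp at hn
    obtain ⟨s, hs⟩ := cs.exists_leftDescent_of_ne_one hd₁
    obtain ⟨d', rfl⟩ : ∃ d', d = cs.simple s * d' := ⟨cs.simple s * d, by simp⟩
    have hlen := cs.isLeftDescent_iff.mp hs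
    rw [cs.simple_mul_simple_cancel_left] at hlen
    have hpos : 0 < weightRep cs d' l (simpleRoot s) := by
      refine (hl.weightRep_simpleRoot_nonneg cs ?_).lt_of_ne' fun h₀ => ?_
      · rw [cs.not_isLeftDescent_iff]
        omega
      · have := hd d' (by rw [weightRep_mul, (weightRep_simple_eq_self_iff cs).mpr h₀])
        omega
    have hdesc : cs.IsRightDescent (g * d'⁻¹) s := by
      by_contra h
      have hneg := hg.apply_nonneg (geomRep_simpleRoot_nonneg cs h)
      rw [LinearMap.neg_apply, weightRep_apply, ← Module.End.mul_apply, ← map_mul,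
        inv_mul_cancel_left, ← weightRep_apply] at hneg
      linarith
    have hd'min : ∀ e, weightRep cs e l = weightRep cs d' l → cs.length d' ≤ cs.length e := by
      intro e he
      have := hd (cs.simple s * e) (by rw [weightRep_mul, he, ← weightRep_mul])
      have := cs.length_mul_le (cs.simple s) e
      rw [cs.length_simple] at this
      omega
    have hlen' := ih hd'min (by omega)
    have := cs.isRightDescent_iff.mp hdesc
    rw [mul_inv_rev, cs.inv_simple, ← mul_assoc]
    omega

theorem finite_length_le [Finite B] (n : ℕ) : {w : W | cs.length w ≤ n}.Finite := by
  refine ((List.finite_length_le B n).image cs.wordProd).subset fun w hw => ?_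
  obtain ⟨l, hl, rfl⟩ := cs.exists_isReduced w
  exact ⟨l, by simpa [hl.eq] using hw, rfl⟩

theorem finite_range_weightRep_iff {l : Weight B} :
    (Set.range fun w => weightRep cs w l).Finite ↔ (weightStabilizer cs l).FiniteIndex := by
  let _ := MulAction.compHom (Weight B) (weightRep cs)
  rw [Subgroup.finiteIndex_iff_finite_quotient]
  exact (MulAction.orbitEquivQuotientStabilizer W l).finite_iff

theorem finiteIndex_stdParabolic_compl_singleton [Finite B] {a b : B} (hab : a ≠ b)
    (h : ConjugateSubgroups (stdParabolic cs {b}ᶜ) (stdParabolic cs {a}ᶜ)) :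
    (stdParabolic cs {a}ᶜ).FiniteIndex := by
  obtain ⟨g, c, hc, hg⟩ := exists_weightRep_fundamentalWeight_eq_neg_smul cs hab h
  have hanti : IsDominant (-weightRep cs g (fundamentalWeight a)) := by
    rw [hg]
    intro t
    simpa using (isDominant_fundamentalWeight b).smul (neg_nonneg.mpr hc.le) t
  rw [← weightStabilizer_fundamentalWeight, ← finite_range_weightRep_iff]
  refine ((finite_length_le cs (cs.length g)).image
    fun d => weightRep cs d (fundamentalWeight a)).subset ?_
  rintro _ ⟨w, rfl⟩
  obtain ⟨d, hdw, hd⟩ := exists_shortest_weightRep_eq cs (fundamentalWeight a) w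
  have hlen := length_mul_inv_add_length_of_shortest cs (isDominant_fundamentalWeight a) hanti hd
  exact ⟨d, Nat.le.intro ((add_comm _ _).trans hlen), hdw⟩

/-- The point of a finite orbit that is farthest from the fundamental chamber is antidominant. -/
theorem IsDominant.exists_isDominant_neg_weightRep {l : Weight B} (hl : IsDominant l)
    [(weightStabilizer cs l).FiniteIndex] : ∃ d, IsDominant (-weightRep cs d l) := by
  have hshort : ∀ m : Set.range fun w => weightRep cs w l, ∃ d, weightRep cs d l = m ∧
      ∀ e, weightRep cs e l = m → cs.length d ≤ cs.length e := by
    rintro ⟨_, w, rfl⟩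
    obtain ⟨d, hd, hmin⟩ := exists_shortest_weightRep_eq cs l w
    exact ⟨d, hd, fun e he => hmin e (he.trans hd.symm)⟩
  choose r hr hmin using hshort
  have hfin : Finite (Set.range fun w => weightRep cs w l) :=
    (finite_range_weightRep_iff cs).mpr inferInstance
  obtain ⟨m, hmax⟩ := Finite.exists_max fun m => cs.length (r m)
  refine ⟨r m, fun t => ?_⟩
  by_contra! ht
  rw [LinearMap.neg_apply, neg_lt_zero] at ht
  set e := r ⟨weightRep cs (cs.simple t * r m) l, Set.mem_range_self _⟩
  have hel : weightRep cs e l = weightRep cs (cs.simple t * r m) l := hr _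
  have hdesc : cs.IsLeftDescent e t := by
    refine hl.isLeftDescent_of_weightRep_neg cs ?_
    rwa [hel, weightRep_mul, weightRep_simple_apply_simpleRoot, neg_lt_zero]
  have hle : cs.length (r m) ≤ cs.length (cs.simple t * e) := by
    refine hmin m _ ?_
    rw [weightRep_mul, hel, ← weightRep_mul, cs.simple_mul_simple_cancel_left, hr]
  exact (hle.trans_lt hdesc).not_ge (hmax _)

theorem exists_ne_conjugateSubgroups_compl_singleton {s : B}
    [(stdParabolic cs {s}ᶜ).FiniteIndex]
    (hn : Subgroup.normalizer (stdParabolic cs {s}ᶜ : Set W) ≤ stdParabolic cs {s}ᶜ) :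
    ∃ t, t ≠ s ∧ ConjugateSubgroups (stdParabolic cs {t}ᶜ) (stdParabolic cs {s}ᶜ) := by
  have : (weightStabilizer cs (fundamentalWeight s)).FiniteIndex := by
    rwa [weightStabilizer_fundamentalWeight]
  obtain ⟨d, hd⟩ := (isDominant_fundamentalWeight s).exists_isDominant_neg_weightRep cs
  obtain ⟨t, ht⟩ : ∃ t, weightRep cs d (fundamentalWeight s) (simpleRoot t) ≠ 0 := by
    by_contra! h₀
    have hd₀ : weightRep cs d (fundamentalWeight s) = 0 := Weight.ext_simpleRoot h₀
    apply fundamentalWeight_ne_zero s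
    rw [← Representation.inv_self_apply (weightRep cs) d (fundamentalWeight s), hd₀, map_zero]
  have hle : MulAut.conj d • stdParabolic cs {s}ᶜ ≤ stdParabolic cs {t}ᶜ := by
    rw [← weightStabilizer_fundamentalWeight cs s, ← weightStabilizer_weightRep,
      ← weightStabilizer_neg, hd.weightStabilizer_eq]
    refine stdParabolic_mono cs fun u hu => ?_
    rintro rfl
    exact ht (neg_eq_zero.mp hu)
  obtain ⟨c, hc, hdc⟩ := exists_weightRep_fundamentalWeight_eq_smul cs hle
  have hconj : MulAut.conj d • stdParabolic cs {s}ᶜ = stdParabolic cs {t}ᶜ := by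
    rw [← weightStabilizer_fundamentalWeight cs s, ← weightStabilizer_weightRep, hdc,
      weightStabilizer_smul cs hc, weightStabilizer_fundamentalWeight]
  refine ⟨t, ?_, conjugateSubgroups_iff_exists_smul.mpr ⟨d, hconj.symm⟩⟩
  rintro rfl
  have hdt := hn (mem_normalizer_iff_conj_smul_eq.mpr hconj)
  rw [← weightStabilizer_fundamentalWeight, mem_weightStabilizer] at hdt
  have hneg := hd t
  rw [hdt, LinearMap.neg_apply, fundamentalWeight_self] at hneg
  linarith

end MaximalParabolics

section Rank

open CoxeterSystem Module

variable {B : Type*} {M : CoxeterMatrix B} {W : Type*} [Group W] (cs : CoxeterSystem M W)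

theorem exists_forall_weightRep_eq_self_of_isReflection {t : W} (ht : cs.IsReflection t) :
    ∃ β : B →₀ ℝ, ∀ l : Weight B, l β = 0 → weightRep cs t l = l := by
  obtain ⟨w, i, rfl⟩ := ht
  refine ⟨geomRep cs w (simpleRoot i), fun l hl => ?_⟩
  have hfix : weightRep cs (cs.simple i) (weightRep cs w⁻¹ l) = weightRep cs w⁻¹ l := by
    rwa [weightRep_simple_eq_self_iff, weightRep_apply, inv_inv]
  rw [weightRep_mul, weightRep_mul, hfix, weightRep, Representation.self_inv_apply]

theorem linearCombination_fundamentalWeight_simpleRoot (c : B →₀ ℝ) (t : B) :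
    Finsupp.linearCombination ℝ fundamentalWeight c (simpleRoot t) = c t := by
  classical simp +contextual [Finsupp.linearCombination_apply, Finsupp.sum, fundamentalWeight,
    Finsupp.single_apply]

/-- A weight in the span of the fundamental weights outside `K` is fixed by `W_K`. If it moreover
vanishes on the roots of the added reflections, then it is fixed by `W`, hence zero. -/
theorem encard_compl_le_of_sup_closure_eq_top {ι : Type*} [Finite ι] {K : Set B} {t : ι → W}
    (ht : ∀ i, cs.IsReflection (t i))
    (h : stdParabolic cs K ⊔ Subgroup.closure (Set.range t) = ⊤) : Kᶜ.encard ≤ Nat.card ι := by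
  choose β hβ using fun i => exists_forall_weightRep_eq_self_of_isReflection cs (ht i)
  let Φ : Weight B →ₗ[ℝ] ι → ℝ := LinearMap.pi fun i => Dual.eval ℝ _ (β i)
  have hindep : LinearIndepOn ℝ (Φ ∘ fundamentalWeight) Kᶜ := by
    refine linearIndepOn_iff.mpr fun c hc hΦ => ?_
    rw [← Finsupp.apply_linearCombination] at hΦ
    set l := Finsupp.linearCombination ℝ fundamentalWeight c with hl
    have hfix : weightStabilizer cs l = ⊤ := by
      rw [eq_top_iff, ← h, sup_le_iff, stdParabolic_le_weightStabilizer_iff, Subgroup.closure_le,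
        Set.range_subset_iff]
      refine ⟨fun k hk => ?_, fun i => hβ i l (congrFun hΦ i)⟩
      rw [hl, linearCombination_fundamentalWeight_simpleRoot]
      exact Finsupp.notMem_support_iff.mp fun hkc => hc hkc hk
    ext s
    rw [← linearCombination_fundamentalWeight_simpleRoot c s, ← hl,
      eq_zero_of_weightStabilizer_eq_top cs hfix]
    rfl
  have := Fintype.ofFinite ι
  have hcard := hindep.encard_le_toENat_rank
  rwa [rank_fun', Cardinal.toENat_nat, ← Nat.card_eq_fintype_card] at hcard

variable {B' : Type*} {M' : CoxeterMatrix B'} (cs' : CoxeterSystem M' W)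

theorem card_le_card_of_isReflection_simple [Finite B] [Finite B']
    (h : ∀ t, cs.IsReflection (cs'.simple t)) :
    Nat.card B ≤ Nat.card B' := by
  have hcard := encard_compl_le_of_sup_closure_eq_top cs (K := ∅) h
    (by rw [cs'.subgroup_closure_range_simple, sup_top_eq])
  rw [Set.compl_empty, Set.encard_univ, ENat.card_eq_coe_natCard] at hcard
  exact_mod_cast hcard

theorem exists_eq_compl_singleton_of_conjugateSubgroups
    (h : ∀ t, cs.IsReflection (cs'.simple t)) {s : B'} {K : Set B}
    (hK : ConjugateSubgroups (stdParabolic cs' {s}ᶜ) (stdParabolic cs K)) : ∃ t, K = {t}ᶜ := by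
  obtain ⟨g, hg⟩ := conjugateSubgroups_iff_exists_smul.mp hK.symm
  have htop : stdParabolic cs' {s}ᶜ ⊔ Subgroup.closure {cs'.simple s} = ⊤ := by
    rw [stdParabolic, ← Subgroup.closure_union, ← Set.image_singleton, ← Set.image_union,
      Set.compl_union_self, Set.image_univ, cs'.subgroup_closure_range_simple]
  have hgen : stdParabolic cs K ⊔
      Subgroup.closure (Set.range fun _ : Unit => g * cs'.simple s * g⁻¹) = ⊤ := by
    have hsmul : (Set.range fun _ : Unit => g * cs'.simple s * g⁻¹) =
        MulAut.conj g • {cs'.simple s} := by simp [Set.smul_set_singleton]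
    rw [hg, hsmul, ← Subgroup.smul_closure, ← Subgroup.smul_sup, htop,
      Subgroup.conj_smul_eq_self_of_mem (Subgroup.mem_top g)]
  have hle := encard_compl_le_of_sup_closure_eq_top cs (fun _ => (h s).conj g) hgen
  have hne : Kᶜ.Nonempty := by
    rw [Set.nonempty_compl]
    rintro rfl
    have hs : cs'.simple s ∈ stdParabolic cs' {s}ᶜ := by
      rw [← Subgroup.smul_mem_pointwise_smul_iff (a := MulAut.conj g), ← hg, stdParabolic_univ]
      exact Subgroup.mem_top _
    exact (simple_mem_stdParabolic_iff cs').mp hs rfl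
  rw [Nat.card_unique, Nat.cast_one] at hle
  obtain ⟨t, ht⟩ := Set.encard_eq_one.mp
    (hle.antisymm (Set.one_le_encard_iff_nonempty.mpr hne))
  exact ⟨t, by rw [← ht, compl_compl]⟩

end Rank

section Intersections

open CoxeterSystem Module

variable {B : Type*} {M : CoxeterMatrix B} {W : Type*} [Group W] (cs : CoxeterSystem M W)

theorem stdParabolic_inf_weightStabilizer {K : Set B} {l : Weight B}
    (hl : ∀ k ∈ K, 0 ≤ l (simpleRoot k)) :
    stdParabolic cs K ⊓ weightStabilizer cs l = stdParabolic cs {k ∈ K | l (simpleRoot k) = 0} := by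
  classical
  let p : Weight B := Finsupp.linearCombination ℝ fun s => if s ∈ K then l (simpleRoot s) else 1
  have hp : ∀ s, p (simpleRoot s) = if s ∈ K then l (simpleRoot s) else 1 := by simp [p]
  have hpdom : IsDominant p := fun s => by
    rw [hp]
    split_ifs with hs
    exacts [hl s hs, zero_le_one]
  have hzero : {s | p (simpleRoot s) = 0} = {k ∈ K | l (simpleRoot k) = 0} := by
    ext s
    by_cases hs : s ∈ K <;> simp [hp, hs]
  have hfix : stdParabolic cs K ≤ weightStabilizer cs (l - p) :=
    (stdParabolic_le_weightStabilizer_iff cs).mpr fun k hk => by simp [hp, hk]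
  have hiff : ∀ w ∈ stdParabolic cs K, w ∈ weightStabilizer cs l ↔ w ∈ weightStabilizer cs p := by
    intro w hw
    have hlp := (mem_weightStabilizer cs).mp (hfix hw)
    rw [map_sub, sub_eq_sub_iff_sub_eq_sub] at hlp
    rw [mem_weightStabilizer, mem_weightStabilizer, ← sub_eq_zero, hlp, sub_eq_zero]
  rw [← hzero, ← hpdom.weightStabilizer_eq]
  have hle : weightStabilizer cs p ≤ stdParabolic cs K := by
    rw [hpdom.weightStabilizer_eq, hzero]
    exact stdParabolic_mono cs (Set.sep_subset _ _)
  ext w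
  exact ⟨fun hw => (hiff w hw.1).mp hw.2, fun hw => ⟨hle hw, (hiff w (hle hw)).mpr hw⟩⟩

/-- After replacing `g⁻¹` by the shortest element of the coset `g⁻¹ W_K`, the translate of the
weight defining `W_J` is nonnegative on the simple roots of `K`. -/
theorem exists_stdParabolic_inf_conj_smul_eq (K J : Set B) (g : W) :
    ∃ a ∈ stdParabolic cs K, ∃ J' ⊆ K,
      stdParabolic cs K ⊓ MulAut.conj g • stdParabolic cs J =
        MulAut.conj a • stdParabolic cs J' := by
  obtain ⟨d, hdg, hd⟩ := exists_shortest_weightRep_eq cs (parabolicWeight K) g⁻¹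
  have ha : g * d ∈ stdParabolic cs K := by
    rw [← weightStabilizer_parabolicWeight, mem_weightStabilizer, weightRep_mul, hdg, weightRep,
      Representation.self_inv_apply]
  have hm : ∀ k ∈ K, 0 ≤ weightRep cs d⁻¹ (parabolicWeight J) (simpleRoot k) := by
    intro k hk
    refine (isDominant_parabolicWeight J).weightRep_simpleRoot_nonneg cs ?_
    rw [cs.isLeftDescent_inv_iff]
    refine (hd _ ?_).not_gt
    rw [weightRep_mul, (weightRep_simple_eq_self_iff cs).mpr]
    simp [parabolicWeight_simpleRoot, hk]
  refine ⟨g * d, ha, {k ∈ K | weightRep cs d⁻¹ (parabolicWeight J) (simpleRoot k) = 0},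
    Set.sep_subset _ _, ?_⟩
  rw [← stdParabolic_inf_weightStabilizer cs hm, weightStabilizer_weightRep,
    weightStabilizer_parabolicWeight, Subgroup.smul_inf, Subgroup.conj_smul_eq_self_of_mem ha,
    smul_smul, ← map_mul, mul_inv_cancel_right]

end Intersections

section ParabolicSystem

open CoxeterSystem Module

variable {B : Type*} (M : CoxeterMatrix B) {W : Type*} [Group W]

/-- The principal submatrix of a Coxeter matrix on the subset `K` of the index set. -/
def restrictMatrix (K : Set B) : CoxeterMatrix K where
  M := M.M.submatrix Subtype.val Subtype.val
  isSymm := M.isSymm.submatrix Subtype.val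
  diagonal i := M.diagonal i
  off_diagonal i j h := M.off_diagonal i j (Subtype.val_injective.ne h)

variable {M} (cs : CoxeterSystem M W) (K : Set B)

/-- The canonical homomorphism from the Coxeter group of the restricted matrix onto a standard
parabolic subgroup; it turns out to be an isomorphism. -/
noncomputable def parabolicHom : (restrictMatrix M K).Group →* stdParabolic cs K :=
  (restrictMatrix M K).toCoxeterSystem.lift
    ⟨fun k => ⟨cs.simple k, simple_mem_stdParabolic cs k.2⟩, fun i j =>
      Subtype.ext (cs.simple_mul_simple_pow i j)⟩

theorem parabolicHom_simple (k : K) :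
    parabolicHom cs K ((restrictMatrix M K).toCoxeterSystem.simple k) =
      ⟨cs.simple k, simple_mem_stdParabolic cs k.2⟩ :=
  lift_apply_simple _ _ k

theorem simpleCoroot_lmapDomain (k : K) (v : K →₀ ℝ) :
    simpleCoroot M k (Finsupp.lmapDomain ℝ ℝ Subtype.val v) =
      simpleCoroot (restrictMatrix M K) k v := by
  refine LinearMap.congr_fun (f := simpleCoroot M k ∘ₗ Finsupp.lmapDomain ℝ ℝ Subtype.val)
    (Weight.ext_simpleRoot fun s => ?_) v
  simp [simpleCoroot, restrictMatrix]

theorem geomRep_parabolicHom (x : (restrictMatrix M K).Group) (v : K →₀ ℝ) :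
    geomRep cs (parabolicHom cs K x : W) (Finsupp.lmapDomain ℝ ℝ Subtype.val v) =
      Finsupp.lmapDomain ℝ ℝ Subtype.val (geomRep (restrictMatrix M K).toCoxeterSystem x v) := by
  induction x using (restrictMatrix M K).toCoxeterSystem.simple_induction generalizing v with
  | simple k =>
    rw [geomRep_simple, map_sub, map_smul, ← simpleCoroot_lmapDomain,
      parabolicHom_simple, geomRep_simple]
    simp
  | one => simp
  | mul a b ha hb => simp only [map_mul, Subgroup.coe_mul, Module.End.mul_apply, hb, ha]

theorem geomRep_injective : Function.Injective (geomRep cs) := by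
  refine (injective_iff_map_eq_one _).mpr fun w hw => ?_
  by_contra hw₁
  obtain ⟨s, hs⟩ := cs.exists_rightDescent_of_ne_one hw₁
  have hneg := geomRep_simpleRoot_nonpos cs hs s
  rw [hw] at hneg
  norm_num at hneg

theorem parabolicHom_bijective : Function.Bijective (parabolicHom cs K) := by
  constructor
  · refine (injective_iff_map_eq_one _).mpr fun x hx => ?_
    refine geomRep_injective (restrictMatrix M K).toCoxeterSystem (LinearMap.ext fun v => ?_)
    have hv := geomRep_parabolicHom cs K x v
    rw [hx, Subgroup.coe_one, map_one, Module.End.one_apply] at hv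
    rw [map_one, Module.End.one_apply]
    exact (Finsupp.mapDomain_injective Subtype.val_injective hv).symm
  · rintro ⟨x, hx⟩
    have hle : stdParabolic cs K ≤
        ((stdParabolic cs K).subtype.comp (parabolicHom cs K)).range := by
      refine (Subgroup.closure_le _).mpr (Set.image_subset_iff.mpr fun k hk => ?_)
      exact ⟨(restrictMatrix M K).toCoxeterSystem.simple ⟨k, hk⟩,
        congrArg Subtype.val (parabolicHom_simple cs K ⟨k, hk⟩)⟩
    obtain ⟨y, hy⟩ := hle hx
    exact ⟨y, Subtype.ext hy⟩

/-- A standard parabolic subgroup is itself a Coxeter group, on the simple reflections it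
contains. -/
noncomputable def parabolicSystem : CoxeterSystem (restrictMatrix M K) (stdParabolic cs K) :=
  (restrictMatrix M K).toCoxeterSystem.map
    (MulEquiv.ofBijective (parabolicHom cs K) (parabolicHom_bijective cs K))

theorem parabolicSystem_simple (k : K) :
    (parabolicSystem cs K).simple k = ⟨cs.simple k, simple_mem_stdParabolic cs k.2⟩ := by
  rw [parabolicSystem, map_simple]
  exact parabolicHom_simple cs K k

theorem map_subtype_stdParabolic_parabolicSystem (J : Set K) :
    (stdParabolic (parabolicSystem cs K) J).map (stdParabolic cs K).subtype =
      stdParabolic cs (Subtype.val '' J) := by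
  refine (MonoidHom.map_closure _ _).trans (congrArg Subgroup.closure ?_)
  simp only [Set.image_image, parabolicSystem_simple, Subgroup.subtype_apply]

theorem stdParabolic_map {H : Type*} [Group H] (e : W ≃* H) (J : Set B) :
    stdParabolic (cs.map e) J = (stdParabolic cs J).map e.toMonoidHom := by
  simp only [stdParabolic, MonoidHom.map_closure, Set.image_image]
  rfl

end ParabolicSystem

section Subordinate

open CoxeterSystem

theorem exists_eq_of_ncard_preimage_le {α β γ : Type*} [Finite α] [Finite β] {f : α → γ}
    {g : β → γ} (h : ∀ c, (f ⁻¹' {c}).ncard ≤ (g ⁻¹' {c}).ncard)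
    (hcard : Nat.card β ≤ Nat.card α) (b : β) : ∃ a, f a = g b := by
  have hemb : ∀ c, Nonempty ({a // f a = c} ↪ {b // g b = c}) := fun c => by
    have := Fintype.ofFinite {a // f a = c}
    have := Fintype.ofFinite {b // g b = c}
    refine Function.Embedding.nonempty_of_card_le ?_
    rw [Fintype.card_eq_nat_card, Fintype.card_eq_nat_card]
    exact h c
  let e : α ↪ β := ((Equiv.sigmaFiberEquiv f).symm.toEmbedding.trans
    (.sigmaMap (.refl γ) fun c => (hemb c).some)).trans (Equiv.sigmaFiberEquiv g).toEmbedding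
  have hge : ∀ a, g (e a) = f a := fun a => ((hemb (f a)).some ⟨a, rfl⟩).2
  obtain ⟨a, rfl⟩ := (e.injective.bijective_of_nat_card_le hcard).surjective b
  exact ⟨a, (hge a).symm⟩

variable {B₁ B₂ W : Type*} [Group W] {M₁ : CoxeterMatrix B₁} {M₂ : CoxeterMatrix B₂}

theorem ne_one_of_isReflection (cs : CoxeterSystem M₁ W) {t : W} (ht : cs.IsReflection t) :
    t ≠ 1 := by
  rintro rfl
  simpa using ht.odd_length

theorem eq_one_or_eq_simple_of_mem_stdParabolic_singleton (cs : CoxeterSystem M₁ W) {i : B₁}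
    {x : W} (hx : x ∈ stdParabolic cs {i}) : x = 1 ∨ x = cs.simple i := by
  rw [stdParabolic, Set.image_singleton, Subgroup.mem_closure_singleton] at hx
  obtain ⟨n, rfl⟩ := hx
  rcases Int.even_or_odd' n with ⟨k, rfl | rfl⟩ <;> simp [zpow_add, zpow_mul, zpow_ofNat]

/-- Every standard parabolic subgroup of the first Coxeter system is conjugate to one of the second:
half of the condition that the two generating sets are parabolic-compatible. -/
def ParabolicallySubordinate (cs₁ : CoxeterSystem M₁ W) (cs₂ : CoxeterSystem M₂ W) : Prop :=
  ∀ J₁ : Set B₁, ∃ J₂ : Set B₂, ConjugateSubgroups (stdParabolic cs₁ J₁) (stdParabolic cs₂ J₂)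

namespace ParabolicallySubordinate

variable {cs₁ : CoxeterSystem M₁ W} {cs₂ : CoxeterSystem M₂ W}

theorem isReflection_simple (h : ParabolicallySubordinate cs₁ cs₂) (t : B₁) :
    cs₂.IsReflection (cs₁.simple t) := by
  obtain ⟨J, hJ⟩ := h {t}
  obtain ⟨g, hg⟩ := conjugateSubgroups_iff_exists_smul.mp hJ
  have hst : cs₁.simple t ∈ stdParabolic cs₁ {t} := simple_mem_stdParabolic cs₁ rfl
  have hJne : J.Nonempty := by
    refine Set.nonempty_iff_ne_empty.mpr fun hJ₀ =>
      ne_one_of_isReflection cs₁ (cs₁.isReflection_simple t) ?_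
    rw [hg, hJ₀] at hst
    simpa [stdParabolic] using hst
  obtain ⟨j, hj⟩ := hJne
  have hgj : g * cs₂.simple j * g⁻¹ ∈ stdParabolic cs₁ {t} := by
    rw [hg]
    exact Subgroup.smul_mem_pointwise_smul _ _ _ (simple_mem_stdParabolic cs₂ hj)
  have hrefl : cs₂.IsReflection (g * cs₂.simple j * g⁻¹) := (cs₂.isReflection_simple j).conj g
  rwa [(eq_one_or_eq_simple_of_mem_stdParabolic_singleton cs₁ hgj).resolve_left
    (ne_one_of_isReflection cs₂ hrefl)] at hrefl

theorem exists_compl_singleton (h : ParabolicallySubordinate cs₁ cs₂) (t : B₁) :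
    ∃ s, ConjugateSubgroups (stdParabolic cs₁ {t}ᶜ) (stdParabolic cs₂ {s}ᶜ) := by
  obtain ⟨K, hK⟩ := h {t}ᶜ
  obtain ⟨s, rfl⟩ :=
    exists_eq_compl_singleton_of_conjugateSubgroups cs₂ cs₁ h.isReflection_simple hK
  exact ⟨s, hK⟩

/-- A class containing two maximal parabolics of `cs₁` contains no third one and consists of
self-normalizing subgroups of finite index, which forces two maximal parabolics of `cs₂` into it. -/
theorem ncard_preimage_le [Finite B₁] [Finite B₂] (h : ParabolicallySubordinate cs₁ cs₂)
    (c : Quotient (ConjugateSubgroups.setoid W)) :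
    ((fun t => ⟦stdParabolic cs₁ {t}ᶜ⟧) ⁻¹' {c}).ncard ≤
      ((fun s => ⟦stdParabolic cs₂ {s}ᶜ⟧) ⁻¹' {c}).ncard := by
  rcases Set.subsingleton_or_nontrivial ((fun t => ⟦stdParabolic cs₁ {t}ᶜ⟧) ⁻¹' {c})
    with hsub | ⟨a, rfl, b, hb, hab⟩
  · rcases Set.eq_empty_or_nonempty ((fun t => ⟦stdParabolic cs₁ {t}ᶜ⟧) ⁻¹' {c})
      with hempty | ⟨t, rfl⟩
    · simp [hempty]
    · obtain ⟨s, hs⟩ := h.exists_compl_singleton t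
      exact (Set.ncard_le_one_iff_subsingleton.mpr hsub).trans
        ((Set.ncard_pos (Set.toFinite _)).mpr ⟨s, (Quotient.sound hs).symm⟩)
  · replace hb := Quotient.exact hb
    obtain ⟨s, hs⟩ := h.exists_compl_singleton a
    have := finiteIndex_stdParabolic_compl_singleton cs₁ hab hb
    have : (stdParabolic cs₂ {s}ᶜ).FiniteIndex := hs.symm.finiteIndex
    obtain ⟨r, hrs, hr⟩ := exists_ne_conjugateSubgroups_compl_singleton cs₂
      (hs.symm.normalizer_le (normalizer_stdParabolic_compl_singleton_le cs₁ hab hb))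
    calc
      _ ≤ ({a, b} : Set B₁).ncard := Set.ncard_le_ncard fun x hx => by
        rw [Set.mem_insert_iff, or_iff_not_imp_left]
        exact fun hxa => eq_of_conjugateSubgroups_compl_singleton cs₁ (Ne.symm hxa) hab
          (Quotient.exact hx) hb
      _ = ({r, s} : Set B₂).ncard := by rw [Set.ncard_pair hab, Set.ncard_pair hrs]
      _ ≤ _ := Set.ncard_le_ncard <| Set.pair_subset
        (Quotient.sound (hr.trans hs.symm)) (Quotient.sound hs.symm)

theorem exists_compl_singleton_symm [Finite B₁] [Finite B₂] (h : ParabolicallySubordinate cs₁ cs₂)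
    (s : B₂) : ∃ t, ConjugateSubgroups (stdParabolic cs₂ {s}ᶜ) (stdParabolic cs₁ {t}ᶜ) := by
  obtain ⟨t, ht⟩ := exists_eq_of_ncard_preimage_le h.ncard_preimage_le
    (card_le_card_of_isReflection_simple cs₂ cs₁ h.isReflection_simple) s
  exact ⟨t, (Quotient.exact ht).symm⟩

theorem restrict (h : ParabolicallySubordinate cs₁ cs₂) {K₁ : Set B₁} {K₂ : Set B₂}
    (hK : ConjugateSubgroups (stdParabolic cs₂ K₂) (stdParabolic cs₁ K₁)) :
    ∃ cs₁' : CoxeterSystem (restrictMatrix M₁ K₁) (stdParabolic cs₂ K₂),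
      ParabolicallySubordinate cs₁' (parabolicSystem cs₂ K₂) ∧
      ∀ J, ConjugateSubgroups ((stdParabolic cs₁' J).map (stdParabolic cs₂ K₂).subtype)
        (stdParabolic cs₁ (Subtype.val '' J)) := by
  obtain ⟨w, hw⟩ := conjugateSubgroups_iff_exists_smul.mp hK
  let e : stdParabolic cs₁ K₁ ≃* stdParabolic cs₂ K₂ :=
    (Subgroup.equivSMul (MulAut.conj w) _).trans (MulEquiv.subgroupCongr hw.symm)
  have he : (stdParabolic cs₂ K₂).subtype.comp e.toMonoidHom =
      (MulAut.conj w).toMonoidHom.comp (stdParabolic cs₁ K₁).subtype := rfl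
  have hmap : ∀ J, (stdParabolic ((parabolicSystem cs₁ K₁).map e) J).map
      (stdParabolic cs₂ K₂).subtype = MulAut.conj w • stdParabolic cs₁ (Subtype.val '' J) := by
    intro J
    rw [stdParabolic_map, Subgroup.map_map, he, ← Subgroup.map_map,
      map_subtype_stdParabolic_parabolicSystem]
    rfl
  refine ⟨(parabolicSystem cs₁ K₁).map e, fun J => ?_, fun J =>
    conjugateSubgroups_iff_exists_smul.mpr ⟨w, hmap J⟩⟩
  obtain ⟨L, hL⟩ := h (Subtype.val '' J)
  obtain ⟨g, hg⟩ := conjugateSubgroups_iff_exists_smul.mp hL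
  obtain ⟨a, ha, J', hJ', hinf⟩ := exists_stdParabolic_inf_conj_smul_eq cs₂ K₂ L (w * g)
  have hle : (stdParabolic ((parabolicSystem cs₁ K₁).map e) J).map (stdParabolic cs₂ K₂).subtype ≤
      stdParabolic cs₂ K₂ := Subgroup.map_subtype_le _
  rw [map_mul, mul_smul, ← hg, ← hmap, inf_eq_right.mpr hle] at hinf
  refine ⟨Subtype.val ⁻¹' J', conjugateSubgroups_iff_exists_smul.mpr ⟨⟨a, ha⟩,
    Subgroup.map_injective (Subgroup.subtype_injective _) ?_⟩⟩
  rw [hinf, map_conj_smul, map_subtype_stdParabolic_parabolicSystem, Subtype.image_preimage_coe,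
    Set.inter_eq_right.mpr hJ', Subgroup.subtype_apply]

end ParabolicallySubordinate

end Subordinate

end CoxeterGeometry

/-- If every standard parabolic of `S₁` is conjugate to a standard parabolic of `S₂`, then
every standard parabolic of `S₂` is conjugate to a standard parabolic of `S₁`. -/
theorem stmt_16 {W : Type*} [Group W] {B₁ B₂ : Type*} [Fintype B₁] [Fintype B₂]
    {M₁ : CoxeterMatrix B₁} {M₂ : CoxeterMatrix B₂}
    (cs₁ : CoxeterSystem M₁ W) (cs₂ : CoxeterSystem M₂ W)
    (h : ∀ J₁ : Set B₁, ∃ J₂ : Set B₂,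
      ConjugateSubgroups (stdParabolic cs₁ J₁) (stdParabolic cs₂ J₂)) :
    ∀ J₂ : Set B₂, ∃ J₁ : Set B₁,
      ConjugateSubgroups (stdParabolic cs₂ J₂) (stdParabolic cs₁ J₁) := by
  classical
  induction hn : Fintype.card B₂ using Nat.strong_induction_on generalizing W B₁ B₂ with
  | _ n ih =>
    intro J₂
    rcases eq_or_ne J₂ Set.univ with rfl | hJ₂
    · exact ⟨Set.univ, by
        simpa only [CoxeterGeometry.stdParabolic_univ] using .refl _⟩
    obtain ⟨s, hs⟩ := (Set.ne_univ_iff_exists_notMem J₂).mp hJ₂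
    obtain ⟨t, ht⟩ := CoxeterGeometry.ParabolicallySubordinate.exists_compl_singleton_symm h s
    obtain ⟨cs₁', h', hconj⟩ := CoxeterGeometry.ParabolicallySubordinate.restrict h ht
    have hcard : Fintype.card ({s}ᶜ : Set B₂) < n :=
      hn ▸ Fintype.card_subtype_lt (x := s) (by simp)
    obtain ⟨J₁, hJ₁⟩ := ih _ hcard cs₁' (CoxeterGeometry.parabolicSystem cs₂ {s}ᶜ) h' rfl
      (Subtype.val ⁻¹' J₂)
    refine ⟨Subtype.val '' J₁, .trans ?_ (hconj J₁)⟩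
    simpa only [CoxeterGeometry.map_subtype_stdParabolic_parabolicSystem,
      Subtype.image_preimage_coe, Set.inter_eq_right.mpr (Set.subset_compl_singleton_iff.mpr hs)]
      using hJ₁.map (stdParabolic cs₂ {s}ᶜ).subtype
end
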